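/- arXiv:0706.3905 — 3 statements merged into one kernel-verified Lean document; each statement's English description precedes it below -/
import Mathlib

section
/- Let U be an open connected subset of ℝⁿ and let f : U → ℝⁿ be differentiable, i.e. at every x ∈ U there is a continuous linear map f′(x) : ℝⁿ → ℝⁿ with HasFDerivAt f (f′(x)) x. Let x₀, x₁ ∈ U, α ∈ ℝ, and let n₀ be an odd natural number and n₁ an even natural number. Suppose there are real polynomials q₀ and q₁ such that for every λ ∈ ℝ: det(f′(x₀) − λ·id) = q₀(λ)·(α − λ)^{n₀} and det(f′(x₁) − λ·id) = q₁(λ)·(α − λ)^{n₁}, and suppose q₀(α)·q₁(α) > 0. Then there exists δ > 0 such that for every λ ∈ (α, α + δ) there exists x₂ ∈ U with det(f′(x₂) − λ·id) = 0. -/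
/-!
For `l` slightly to the right of `α` the determinants of `f' x₀ - l • id` and `f' x₁ - l • id` have
opposite signs, so it suffices to show that the Jacobian determinant of a differentiable map
`f : U → E` cannot change sign without vanishing. Suppose it did. By Baire's theorem some relatively
open piece of the set of sign changes admits an invertible `B` such that
`‖B (f y) - B (f x) - (y - x)‖ ≤ ‖y - x‖ / 2` for all `x` in the piece and all nearby `y`. Near a
point `a` of the piece, `B ∘ f` is then a perturbation of the identity of degree one, so each value
close to `B (f a)` is attained at some `x` where `B ∘ f` has positive determinant. Apply this to the
value `B (f z)`, where `B ∘ f` has negative determinant at `z`: the segment from `z` to `x` contains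
a sign change `w`, and the estimate at `w` forces `z = x`.

The degree statement is needed for continuous maps that are merely differentiable on one fibre. Such
a map can be made affine near each point of the (finite) fibre without creating new preimages, and
then approximated by a `C¹` map. For `C¹` maps it follows from the fact that the integral of
`det F'` over a compact set depends only on the values of `F` off that set.
-/

open Set Filter Topology MeasureTheory Module

variable {E : Type*} [NormedAddCommGroup E] [NormedSpace ℝ E]

section NullLagrangian

lemma bijective_smul_add_of_lipschitzWith [CompleteSpace E] {H : E → E} {K : NNReal} {c : ℝ}
    (hH : LipschitzWith K H) (hKc : K < c) : Function.Bijective fun x => c • x + H x := by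
  have hc : 0 < c := K.2.trans_lt hKc
  let A : E ≃L[ℝ] E := ContinuousLinearEquiv.smulLeft (Units.mk0 c hc.ne')
  have happrox : ApproximatesLinearOn (fun x => c • x + H x) (A : E →L[ℝ] E) univ K := by
    rw [ApproximatesLinearOn.approximatesLinearOn_iff_lipschitzOnWith]
    convert! hH.lipschitzOnWith using 1
    ext x
    simp [A, Units.smul_def]
  have hnorm : Subsingleton E ∨ K < ‖(A.symm : E →L[ℝ] E)‖₊⁻¹ := by
    rcases subsingleton_or_nontrivial E with hE | hE
    · exact .inl hE
    have : (A.symm : E →L[ℝ] E) = c⁻¹ • ContinuousLinearMap.id ℝ E := rfl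
    right
    rw [← NNReal.coe_lt_coe, this]
    simpa [norm_smul, abs_of_pos hc] using hKc
  exact ⟨injOn_univ.1 (happrox.injOn hnorm), happrox.surjective hnorm⟩

variable [FiniteDimensional ℝ E]

lemma det_smul_id_add_eq_eval_charpoly (M : E →L[ℝ] E) (c : ℝ) :
    (c • ContinuousLinearMap.id ℝ E + M).det = (-(M : E →ₗ[ℝ] E)).charpoly.eval c := by
  rw [LinearMap.eval_charpoly, ContinuousLinearMap.det]
  congr 1
  ext x
  simp [Module.algebraMap_end_apply]

lemma det_eq_sum_eval_lagrange_basis {s : Finset ℝ} (hs : finrank ℝ E < s.card)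
    (M : E →L[ℝ] E) :
    M.det = ∑ c ∈ s, (c • ContinuousLinearMap.id ℝ E + M).det * (Lagrange.basis s id c).eval 0 := by
  have hdegree : (-(M : E →ₗ[ℝ] E)).charpoly.degree < s.card := by
    rw [Polynomial.degree_eq_natDegree (LinearMap.charpoly_monic _).ne_zero,
      LinearMap.charpoly_natDegree]
    exact_mod_cast hs
  have hinterpolate := congrArg (Polynomial.eval 0)
    (Lagrange.eq_interpolate Function.injective_id.injOn hdegree)
  rw [Lagrange.interpolate_apply, Polynomial.eval_finsetSum,
    ← det_smul_id_add_eq_eval_charpoly, zero_smul, zero_add] at hinterpolate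
  simpa only [Polynomial.eval_mul, Polynomial.eval_C, id,
    ← det_smul_id_add_eq_eval_charpoly] using hinterpolate

lemma eventually_atTop_det_smul_id_add_pos (K : ℝ) :
    ∀ᶠ c : ℝ in atTop, ∀ M : E →L[ℝ] E, ‖M‖ ≤ K →
      0 < (c • ContinuousLinearMap.id ℝ E + M).det := by
  have hid : ∀ᶠ N in 𝓝 (ContinuousLinearMap.id ℝ E), 0 < N.det :=
    ContinuousLinearMap.continuous_det.continuousAt.eventually
      (lt_mem_nhds (by simp [ContinuousLinearMap.det]))
  obtain ⟨δ, hδ, hball⟩ := Metric.eventually_nhds_iff.1 hid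
  filter_upwards [eventually_gt_atTop 0, eventually_gt_atTop (K / δ)] with c hc hKc M hM
  have hfactor : c • ContinuousLinearMap.id ℝ E + M =
      c • (ContinuousLinearMap.id ℝ E + c⁻¹ • M) := by
    rw [smul_add, smul_inv_smul₀ hc.ne']
  rw [hfactor, ContinuousLinearMap.det, ContinuousLinearMap.toLinearMap_smul, LinearMap.det_smul]
  refine mul_pos (by positivity) (hball ?_)
  rw [dist_eq_norm, add_sub_cancel_left, norm_smul, norm_inv, Real.norm_of_nonneg hc.le,
    inv_mul_lt_iff₀ hc]
  exact hM.trans_lt ((div_lt_iff₀ hδ).1 hKc)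

variable [MeasurableSpace E] [BorelSpace E] (μ : Measure E) [μ.IsAddHaarMeasure]

lemma setIntegral_det_smul_id_add_fderiv {H : E → E} {K : NNReal} {c : ℝ} {S : Set E}
    (hH : Differentiable ℝ H) (hHK : LipschitzWith K H) (hKc : K < c)
    (hdet : ∀ M : E →L[ℝ] E, ‖M‖ ≤ K → 0 < (c • ContinuousLinearMap.id ℝ E + M).det)
    (hS : MeasurableSet S) :
    ∫ x in S, (c • ContinuousLinearMap.id ℝ E + fderiv ℝ H x).det ∂μ =
      μ.real ((fun x => c • x + H x) '' S) := by
  have hderiv : ∀ x ∈ S, HasFDerivWithinAt (fun x => c • x + H x)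
      (c • ContinuousLinearMap.id ℝ E + fderiv ℝ H x) S x := fun x _ =>
    (((hasFDerivAt_id x).const_smul c).add (hH x).hasFDerivAt).hasFDerivWithinAt
  have harea := integral_image_eq_integral_abs_det_fderiv_smul μ hS hderiv
    (bijective_smul_add_of_lipschitzWith hHK hKc).1.injOn (fun _ => (1 : ℝ))
  rw [setIntegral_const, smul_eq_mul, mul_one] at harea
  rw [harea]
  refine integral_congr_ae (Eventually.of_forall fun x => ?_)
  simp only [smul_eq_mul, mul_one, abs_of_pos (hdet _ (norm_fderiv_le_of_lipschitz ℝ hHK))]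

lemma setIntegral_det_smul_id_add_fderiv_congr {F G : E → E} {K : NNReal} {c : ℝ} {S : Set E}
    (hF : Differentiable ℝ F) (hG : Differentiable ℝ G) (hFK : LipschitzWith K F)
    (hGK : LipschitzWith K G) (hKc : K < c)
    (hdet : ∀ M : E →L[ℝ] E, ‖M‖ ≤ K → 0 < (c • ContinuousLinearMap.id ℝ E + M).det)
    (hS : MeasurableSet S) (hFG : EqOn F G Sᶜ) :
    ∫ x in S, (c • ContinuousLinearMap.id ℝ E + fderiv ℝ F x).det ∂μ =
      ∫ x in S, (c • ContinuousLinearMap.id ℝ E + fderiv ℝ G x).det ∂μ := by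
  have himage : (fun x => c • x + F x) '' S = (fun x => c • x + G x) '' S := by
    apply compl_injective
    rw [← image_compl_eq (bijective_smul_add_of_lipschitzWith hFK hKc),
      ← image_compl_eq (bijective_smul_add_of_lipschitzWith hGK hKc)]
    exact image_congr fun x hx => by rw [hFG hx]
  rw [setIntegral_det_smul_id_add_fderiv μ hF hFK hKc hdet hS,
    setIntegral_det_smul_id_add_fderiv μ hG hGK hKc hdet hS, himage]

lemma setIntegral_det_fderiv_eq_sum {H : E → E} {S : Set E} {s : Finset ℝ}
    (hH : ContDiff ℝ 1 H) (hS : IsCompact S) (hs : finrank ℝ E < s.card) :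
    ∫ x in S, (fderiv ℝ H x).det ∂μ =
      ∑ c ∈ s, (∫ x in S, (c • ContinuousLinearMap.id ℝ E + fderiv ℝ H x).det ∂μ) *
        (Lagrange.basis s id c).eval 0 := by
  have hcont (c : ℝ) :
      Continuous fun x => (c • ContinuousLinearMap.id ℝ E + fderiv ℝ H x).det :=
    ContinuousLinearMap.continuous_det.comp
      (continuous_const.add (hH.continuous_fderiv one_ne_zero))
  simp_rw [← integral_mul_const]
  rw [← integral_finsetSum]
  · exact integral_congr_ae (Eventually.of_forall fun x => det_eq_sum_eval_lagrange_basis hs _)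
  · exact fun c _ => ((hcont c).continuousOn.integrableOn_compact hS).mul_const _

-- `det M` is interpolated from the values `det (c • id + M)` at large `c`, where `x ↦ c • x + F x`
-- is an orientation-preserving bijection and the integral is the volume of an image.
lemma setIntegral_det_fderiv_congr_of_lipschitzWith {F G : E → E} {K : NNReal} {S : Set E}
    (hF : ContDiff ℝ 1 F) (hG : ContDiff ℝ 1 G) (hFK : LipschitzWith K F)
    (hGK : LipschitzWith K G) (hS : IsCompact S) (hFG : EqOn F G Sᶜ) :
    ∫ x in S, (fderiv ℝ F x).det ∂μ = ∫ x in S, (fderiv ℝ G x).det ∂μ := by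
  obtain ⟨c₀, hc₀⟩ := eventually_atTop.1
    ((eventually_gt_atTop (K : ℝ)).and (eventually_atTop_det_smul_id_add_pos (E := E) K))
  obtain ⟨s, hsc₀, hcard⟩ := (Ioi_infinite c₀).exists_subset_card_eq (finrank ℝ E + 1)
  have hs : finrank ℝ E < s.card := by lia
  rw [setIntegral_det_fderiv_eq_sum μ hF hS hs, setIntegral_det_fderiv_eq_sum μ hG hS hs]
  refine Finset.sum_congr rfl fun c hc => ?_
  obtain ⟨hKc, hdet⟩ := hc₀ c (hsc₀ hc).le
  rw [setIntegral_det_smul_id_add_fderiv_congr μ (hF.differentiable one_ne_zero)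
    (hG.differentiable one_ne_zero) hFK hGK hKc hdet hS.measurableSet hFG]

lemma setIntegral_det_fderiv_congr_of_eqOn_compl {F G : E → E} {S : Set E}
    (hF : ContDiff ℝ 1 F) (hG : ContDiff ℝ 1 G) (hS : IsCompact S) (hFG : EqOn F G Sᶜ) :
    ∫ x in S, (fderiv ℝ F x).det ∂μ = ∫ x in S, (fderiv ℝ G x).det ∂μ := by
  obtain ⟨R, hR, hSR⟩ := hS.isBounded.subset_ball_lt 0 0
  let χ : ContDiffBump (0 : E) := ⟨R, R + 1, hR, lt_add_one R⟩
  have hcutoff {H : E → E} (hH : ContDiff ℝ 1 H) :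
      (∃ K, LipschitzWith K fun x => χ x • H x) ∧
        ∀ x ∈ S, fderiv ℝ (fun x => χ x • H x) x = fderiv ℝ H x := by
    refine ⟨(χ.contDiff.smul hH).lipschitzWith_of_hasCompactSupport
      χ.hasCompactSupport.smul_right one_ne_zero, fun x hx => EventuallyEq.fderiv_eq ?_⟩
    filter_upwards [Metric.isOpen_ball.mem_nhds (hSR hx)] with z hz
    rw [χ.one_of_mem_closedBall (Metric.ball_subset_closedBall hz), one_smul]
  obtain ⟨⟨K, hFK⟩, hF'⟩ := hcutoff hF
  obtain ⟨⟨L, hGL⟩, hG'⟩ := hcutoff hG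
  rw [← setIntegral_congr_fun hS.measurableSet fun x hx => congrArg _ (hF' x hx),
    ← setIntegral_congr_fun hS.measurableSet fun x hx => congrArg _ (hG' x hx)]
  exact setIntegral_det_fderiv_congr_of_lipschitzWith μ (χ.contDiff.smul hF)
    (χ.contDiff.smul hG) (hFK.weaken (le_max_left K L)) (hGL.weaken (le_max_right K L)) hS
    fun x hx => by simp only [hFG hx]

end NullLagrangian

section Degree

lemma exists_contDiff_deriv_bump (y : ℝ) {ρ : ℝ} (hρ : 0 < ρ) :
    ∃ S : ℝ → ℝ, ContDiff ℝ 1 S ∧ (∀ t, 0 ≤ deriv S t) ∧ 0 < deriv S y ∧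
      ∀ t, ρ ≤ |t - y| → deriv S t = 0 := by
  let b : ℝ → ℝ := fun t => max 0 (ρ - |t - y|)
  have hb : Continuous b := by fun_prop
  let S : ℝ → ℝ := fun t => ∫ u in 0..t, b u
  have hS (t : ℝ) : HasDerivAt S (b t) t := (hb.integral_hasStrictDerivAt 0 t).hasDerivAt
  have hderiv : deriv S = b := funext fun t => (hS t).deriv
  refine ⟨S, contDiff_one_iff_deriv.2 ⟨fun t => (hS t).differentiableAt, hderiv ▸ hb⟩, ?_⟩
  simp only [hderiv]
  exact ⟨fun t => le_max_left _ _, by simp [b, hρ], fun t ht => max_eq_left (sub_nonpos.2 ht)⟩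

lemma det_fderiv_pi {ι : Type*} [Fintype ι] {S : ι → ℝ → ℝ} (hS : ∀ i, Differentiable ℝ (S i))
    (x : ι → ℝ) : (fderiv ℝ (fun x i => S i (x i)) x).det = ∏ i, deriv (S i) (x i) := by
  have hderiv : HasFDerivAt (fun x i => S i (x i)) (ContinuousLinearMap.pi fun i =>
      (ContinuousLinearMap.toSpanSingleton ℝ (deriv (S i) (x i))).comp (.proj i)) x :=
    hasFDerivAt_pi.2 fun i => (hS i (x i)).hasDerivAt.hasFDerivAt.comp x (hasFDerivAt_apply i x)
  simp only [hderiv.fderiv, ContinuousLinearMap.det_pi, ContinuousLinearMap.det_toSpanSingleton]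

lemma exists_contDiff_det_fderiv_bump_pi {ι : Type*} [Fintype ι] {y : ι → ℝ} {W : Set (ι → ℝ)}
    (hW : W ∈ 𝓝 y) :
    ∃ Φ : (ι → ℝ) → ι → ℝ, ContDiff ℝ 1 Φ ∧ (∀ x, 0 ≤ (fderiv ℝ Φ x).det) ∧
      0 < (fderiv ℝ Φ y).det ∧ ∀ x ∉ W, (fderiv ℝ Φ x).det = 0 := by
  obtain ⟨ρ, hρ, hρW⟩ := Metric.mem_nhds_iff.1 hW
  choose S hS hnonneg hpos hzero using fun i => exists_contDiff_deriv_bump (y i) hρ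
  refine ⟨fun x i => S i (x i), contDiff_pi.2 fun i => (hS i).comp (contDiff_apply ℝ ℝ i), ?_⟩
  simp only [det_fderiv_pi fun i => (hS i).differentiable one_ne_zero]
  refine ⟨fun x => Finset.prod_nonneg fun i _ => hnonneg i _,
    Finset.prod_pos fun i _ => hpos i, fun x hx => ?_⟩
  obtain ⟨i, hi⟩ : ∃ i, ρ ≤ |x i - y i| := by
    by_contra! hlt
    exact hx (hρW ((dist_pi_lt_iff hρ).2 hlt))
  exact Finset.prod_eq_zero (Finset.mem_univ i) (hzero i _ hi)

variable [FiniteDimensional ℝ E]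

lemma exists_contDiff_det_fderiv_bump {y : E} {W : Set E} (hW : W ∈ 𝓝 y) :
    ∃ Φ : E → E, ContDiff ℝ 1 Φ ∧ (∀ x, 0 ≤ (fderiv ℝ Φ x).det) ∧
      0 < (fderiv ℝ Φ y).det ∧ ∀ x ∉ W, (fderiv ℝ Φ x).det = 0 := by
  let e : E ≃L[ℝ] (Fin (finrank ℝ E) → ℝ) := ContinuousLinearEquiv.ofFinrankEq (by simp)
  obtain ⟨Φ, hΦ, hnonneg, hpos, hzero⟩ := exists_contDiff_det_fderiv_bump_pi (y := e y)
    (W := e.symm ⁻¹' W) (e.symm.continuous.continuousAt.preimage_mem_nhds (by simpa using hW))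
  have hdet (x : E) : (fderiv ℝ (e.symm ∘ Φ ∘ e) x).det = (fderiv ℝ Φ (e x)).det := by
    rw [e.symm.comp_fderiv, e.comp_right_fderiv]
    exact LinearMap.det_conj (fderiv ℝ Φ (e x) : (Fin (finrank ℝ E) → ℝ) →ₗ[ℝ] _)
      e.symm.toLinearEquiv
  refine ⟨e.symm ∘ Φ ∘ e, e.symm.contDiff.comp (hΦ.comp e.contDiff), ?_⟩
  simp only [hdet]
  exact ⟨fun x => hnonneg _, hpos, fun x hx => hzero _ (by simpa using hx)⟩

lemma exists_det_fderiv_pos_of_contDiff {g : E → E} (hg : ContDiff ℝ 1 g)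
    (hgid : g =ᶠ[cocompact E] id) {y : E} {W : Set E} (hW : W ∈ 𝓝 y) :
    ∃ x, g x ∈ W ∧ 0 < (fderiv ℝ g x).det := by
  -- Otherwise the nonnegative density `det (fderiv ℝ Φ)`, concentrated on `W`, has a nonpositive
  -- pullback along `g`, although `Φ ∘ g` and `Φ` agree off a compact set.
  by_contra! hnonpos
  borelize E
  let μ : Measure E := Measure.addHaar
  obtain ⟨Φ, hΦ, hΦnonneg, hΦpos, hΦzero⟩ := exists_contDiff_det_fderiv_bump hW
  obtain ⟨S, hS, hgS⟩ := mem_cocompact.1 hgid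
  let T := S ∪ Metric.closedBall y 1
  have hT : IsCompact T := hS.union (isCompact_closedBall y 1)
  have heq : ∫ x in T, (fderiv ℝ (Φ ∘ g) x).det ∂μ = ∫ x in T, (fderiv ℝ Φ x).det ∂μ :=
    setIntegral_det_fderiv_congr_of_eqOn_compl μ (hΦ.comp hg) hΦ hT fun x hx =>
      congrArg Φ (hgS fun hxS => hx (.inl hxS))
  have hle : ∫ x in T, (fderiv ℝ (Φ ∘ g) x).det ∂μ ≤ 0 := by
    refine integral_nonpos fun x => ?_
    rw [fderiv_comp x (hΦ.differentiable one_ne_zero _) (hg.differentiable one_ne_zero _),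
      ContinuousLinearMap.det, ContinuousLinearMap.toLinearMap_comp, LinearMap.det_comp]
    by_cases hx : g x ∈ W
    · exact mul_nonpos_of_nonneg_of_nonpos (hΦnonneg _) (hnonpos x hx)
    · exact (mul_eq_zero_of_left (hΦzero _ hx) _).le
  have hcont : Continuous fun x => (fderiv ℝ Φ x).det :=
    ContinuousLinearMap.continuous_det.comp (hΦ.continuous_fderiv one_ne_zero)
  have hlt : 0 < ∫ x in T, (fderiv ℝ Φ x).det ∂μ := by
    rw [setIntegral_pos_iff_support_of_nonneg_ae (.of_forall hΦnonneg)
      (hcont.continuousOn.integrableOn_compact hT)]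
    refine Measure.measure_pos_of_mem_nhds μ (x := y) (inter_mem ?_ ?_)
    · exact hcont.isOpen_support.mem_nhds hΦpos.ne'
    · exact mem_of_superset (Metric.closedBall_mem_nhds y one_pos) subset_union_right
  linarith

lemma isProperMap_of_eventuallyEq_id {X : Type*} [TopologicalSpace X] [T2Space X]
    [CompactlyCoherentSpace X] {h : X → X} (hh : Continuous h)
    (hid : h =ᶠ[cocompact X] id) : IsProperMap h :=
  isProperMap_iff_tendsto_cocompact.2 ⟨hh, tendsto_id.congr' hid.symm⟩

lemma exists_contDiff_approx_eventuallyEq_id {h : E → E} (hh : Continuous h)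
    (hid : h =ᶠ[cocompact E] id) {L O : Set E} (hL : IsClosed L) (hO : O ∈ 𝓝ˢ L)
    (hhO : ContDiffOn ℝ 1 h O) {η : ℝ} (hη : 0 < η) :
    ∃ g : E → E, ContDiff ℝ 1 g ∧ g =ᶠ[cocompact E] id ∧ (∀ x, dist (h x) (g x) < η) ∧
      EqOn g h L := by
  obtain ⟨ψ, hψ, hψdist, hψL, hψsupp⟩ := (hh.sub continuous_id).exists_contDiff_approx_and_eqOn
    1 (ε := fun _ => η) continuous_const (fun _ => hη) hL hO (hhO.sub contDiffOn_id)
  refine ⟨fun x => x + ψ x, contDiff_id.add hψ, ?_, fun x => ?_, fun x hx => ?_⟩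
  · filter_upwards [hid] with x hx
    have : ψ x = 0 := Function.notMem_support.1 fun hxψ => hψsupp hxψ (by simp [hx])
    simp [this]
  · rw [dist_comm, ← dist_sub_right _ _ x, add_sub_cancel_left]
    exact hψdist x
  · simp [hψL hx]

lemma exists_det_fderiv_nonneg_of_contDiffAt {h : E → E} (hh : Continuous h)
    (hid : h =ᶠ[cocompact E] id) {y : E} (hC : ∀ x, h x = y → ContDiffAt ℝ 1 h x) :
    ∃ x, h x = y ∧ 0 ≤ (fderiv ℝ h x).det := by
  by_contra! hneg
  have hproper := isProperMap_of_eventuallyEq_id hh hid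
  let O := {x | ∀ᶠ z in 𝓝 x, ContDiffAt ℝ 1 h z ∧ (fderiv ℝ h z).det < 0}
  have hO : IsOpen O := isOpen_setOfPred_eventually_nhds
  have hfiber : h ⁻¹' {y} ⊆ O := fun x hx =>
    ((hC x hx).eventually (by simp)).and <|
      (ContinuousLinearMap.continuous_det.continuousAt.comp
        ((hC x hx).continuousAt_fderiv one_ne_zero)).eventually (gt_mem_nhds (hneg x hx))
  obtain ⟨L, hL, hfiberL, hLO⟩ :=
    exists_compact_between (hproper.isCompact_preimage isCompact_singleton) hO hfiber
  obtain ⟨η, hη, hηL⟩ := Metric.eventually_nhds_iff.1 <|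
    hproper.isClosedMap.eventually_nhds_fiber y fun x hx => isOpen_interior.mem_nhds (hfiberL hx)
  obtain ⟨g, hg, hgid, hgh, hgL⟩ := exists_contDiff_approx_eventuallyEq_id hh hid hL.isClosed
    (hO.mem_nhdsSet.2 hLO) (fun x hx => hx.self_of_nhds.1.contDiffWithinAt) (half_pos hη)
  obtain ⟨x, hxy, hxpos⟩ := exists_det_fderiv_pos_of_contDiff hg hgid
    (Metric.ball_mem_nhds y (half_pos hη))
  have hxL : x ∈ interior L := hηL
    (by linarith [dist_triangle (h x) (g x) y, Metric.mem_ball.1 hxy, hgh x]) x rfl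
  rw [(hgL.eventuallyEq_of_mem (mem_interior_iff_mem_nhds.1 hxL)).fderiv_eq] at hxpos
  exact lt_asymm hxpos (hLO (interior_subset hxL)).self_of_nhds.2

end Degree

section Linearization

variable [FiniteDimensional ℝ E]

lemma eventually_eq_of_affine_homotopy_eq {h : E → E} {A : E →L[ℝ] E} {z : E}
    (hA : HasFDerivAt h A z) (hdet : A.det ≠ 0) :
    ∀ᶠ x in 𝓝 z, ∀ t ∈ Icc (0 : ℝ) 1, h x + t • (h z + A (x - z) - h x) = h z → x = z := by
  let e := A.toContinuousLinearEquivOfDetNeZero hdet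
  have hlittle := ((e.symm : E →L[ℝ] E).isBigO_comp
    (fun x => h x - h z - A (x - z)) (𝓝 z)).trans_isLittleO hA.isLittleO
  filter_upwards [hlittle.def (half_pos one_pos)] with x hx t ht hxt
  have hsub : x - z = -((1 - t) • e.symm (h x - h z - A (x - z))) := by
    apply e.injective
    rw [map_neg, map_smul, e.apply_symm_apply]
    change A (x - z) = _
    linear_combination (norm := module) (1 : ℝ) • hxt
  have hnorm : ‖x - z‖ ≤ 1 / 2 * ‖x - z‖ := by
    calc ‖x - z‖ = (1 - t) * ‖e.symm (h x - h z - A (x - z))‖ := by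
          conv_lhs => rw [hsub]
          rw [norm_neg, norm_smul, Real.norm_of_nonneg (sub_nonneg.2 ht.2)]
      _ ≤ 1 * (1 / 2 * ‖x - z‖) :=
          mul_le_mul (by linarith [ht.1]) hx (norm_nonneg _) zero_le_one
      _ = 1 / 2 * ‖x - z‖ := one_mul _
  exact sub_eq_zero.1 (norm_le_zero_iff.1 (by linarith))

lemma exists_continuous_contDiffAt_eqOn_compl {h : E → E} (hh : Continuous h) {A : E →L[ℝ] E}
    {z : E} (hA : HasFDerivAt h A z) (hdet : A.det ≠ 0) {V : Set E} (hV : V ∈ 𝓝 z) :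
    ∃ h₁ : E → E, Continuous h₁ ∧ EqOn h₁ h Vᶜ ∧ HasFDerivAt h₁ A z ∧ ContDiffAt ℝ 1 h₁ z ∧
      ∀ x, h₁ x = h z ↔ h x = h z := by
  obtain ⟨r, hr, hrV⟩ := Metric.mem_nhds_iff.1
    (inter_mem hV (eventually_eq_of_affine_homotopy_eq hA hdet))
  let χ : ContDiffBump z := ⟨r / 2, r, half_pos hr, half_lt_self hr⟩
  have hχzero {x : E} (hx : x ∉ Metric.ball z r) : χ x = 0 :=
    χ.zero_of_le_dist (not_lt.1 hx)
  let h₁ : E → E := fun x => h x + χ x • (h z + A (x - z) - h x)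
  have haffine : h₁ =ᶠ[𝓝 z] fun x => h z + A (x - z) := by
    filter_upwards [χ.eventuallyEq_one] with x hx
    simp [h₁, hx]
  refine ⟨h₁, ?_, fun x hx => ?_, ?_, ContDiffAt.congr_of_eventuallyEq (by fun_prop) haffine,
    fun x => ?_⟩
  · have := χ.continuous
    fun_prop
  · simp [h₁, hχzero fun hxr => hx (hrV hxr).1]
  · refine HasFDerivAt.congr_of_eventuallyEq ?_ haffine
    simpa using (A.hasFDerivAt.comp z ((hasFDerivAt_id z).sub_const z)).const_add (h z)
  · by_cases hxr : x ∈ Metric.ball z r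
    · refine ⟨fun hx => ?_, fun hx => ?_⟩
      · rw [(hrV hxr).2 (χ x) ⟨χ.nonneg, χ.le_one⟩ hx]
      · have hxz : x = z := (hrV hxr).2 0 ⟨le_rfl, zero_le_one⟩ (by simpa using hx)
        simp [h₁, hxz]
    · simp [h₁, hχzero hxr]

lemma finite_fiber_of_hasFDerivAt {h : E → E} {y : E} (hcompact : IsCompact (h ⁻¹' {y}))
    {A : E → E →L[ℝ] E} (hA : ∀ x, h x = y → HasFDerivAt h (A x) x)
    (hdet : ∀ x, h x = y → (A x).det ≠ 0) : (h ⁻¹' {y}).Finite := by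
  by_contra hinfinite
  obtain ⟨z, hz, hacc⟩ :=
    Set.Infinite.exists_accPt_of_subset_isCompact hinfinite hcompact subset_rfl
  obtain ⟨x, ⟨hxz, hx⟩, hisolated⟩ := ((accPt_iff_frequently.1 hacc).and_eventually
    (eventually_eq_of_affine_homotopy_eq (hA z hz) (hdet z hz))).exists
  exact hxz (hisolated 0 ⟨le_rfl, zero_le_one⟩ (by simpa using hx.trans hz.symm))

lemma exists_continuous_contDiffAt_of_finite_fiber {h : E → E} (hh : Continuous h) {y : E}
    {A : E → E →L[ℝ] E} (hA : ∀ x, h x = y → HasFDerivAt h (A x) x)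
    (hdet : ∀ x, h x = y → (A x).det ≠ 0) (hfinite : (h ⁻¹' {y}).Finite) :
    ∃ h₁ : E → E, Continuous h₁ ∧ h₁ =ᶠ[cocompact E] h ∧
      ∀ x, h₁ x = y → h x = y ∧ HasFDerivAt h₁ (A x) x ∧ ContDiffAt ℝ 1 h₁ x := by
  suffices hpartial : ∀ S ⊆ h ⁻¹' {y}, ∃ h₁ : E → E, Continuous h₁ ∧ h₁ =ᶠ[cocompact E] h ∧
      (∀ x, h₁ x = y ↔ h x = y) ∧ (∀ x, h x = y → HasFDerivAt h₁ (A x) x) ∧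
      ∀ x ∈ S, ContDiffAt ℝ 1 h₁ x by
    obtain ⟨h₁, hh₁, hcocompact, hfiber, hderiv, hC⟩ := hpartial _ subset_rfl
    exact ⟨h₁, hh₁, hcocompact, fun x hx =>
      ⟨(hfiber x).1 hx, hderiv x ((hfiber x).1 hx), hC x ((hfiber x).1 hx)⟩⟩
  intro S hS
  induction S, hfinite.subset hS using Set.Finite.induction_on with
  | empty => exact ⟨h, hh, .rfl, fun _ => .rfl, hA, by simp⟩
  | @insert z S hzS _ ih =>
    obtain ⟨h₁, hh₁, hcocompact, hfiber, hderiv, hC⟩ := ih ((subset_insert z S).trans hS)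
    have hz : h z = y := hS (mem_insert z S)
    obtain ⟨r, hr, hball⟩ := Metric.nhds_basis_closedBall.mem_iff.1
      ((hfinite.subset sdiff_subset : (h ⁻¹' {y} \ {z}).Finite).isClosed.compl_mem_nhds
        fun hzz => hzz.2 rfl)
    obtain ⟨h₂, hh₂, hh₂h₁, hderivz, hCz, hfiber₂⟩ := exists_continuous_contDiffAt_eqOn_compl hh₁
      (hderiv z hz) (hdet z hz) (Metric.closedBall_mem_nhds z hr)
    rw [(hfiber z).2 hz] at hfiber₂
    have hnear {x : E} (hx : h x = y) (hxz : x ≠ z) : h₂ =ᶠ[𝓝 x] h₁ :=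
      hh₂h₁.eventuallyEq_of_mem (Metric.isClosed_closedBall.compl_mem_nhds fun hxr =>
        hball hxr ⟨hx, hxz⟩)
    refine ⟨h₂, hh₂, ?_, fun x => (hfiber₂ x).trans (hfiber x), fun x hx => ?_, ?_⟩
    · exact (hh₂h₁.eventuallyEq_of_mem (isCompact_closedBall z r).compl_mem_cocompact).trans
        hcocompact
    · by_cases hxz : x = z
      · rwa [hxz]
      · exact (hderiv x hx).congr_of_eventuallyEq (hnear hx hxz)
    · rintro x (rfl | hx)
      · exact hCz
      · exact (hC x hx).congr_of_eventuallyEq (hnear (hS (mem_insert_of_mem z hx))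
          (ne_of_mem_of_not_mem hx hzS))

lemma exists_det_nonneg_of_hasFDerivAt {h : E → E} (hh : Continuous h)
    (hid : h =ᶠ[cocompact E] id) {y : E} {A : E → E →L[ℝ] E}
    (hA : ∀ x, h x = y → HasFDerivAt h (A x) x) : ∃ x, h x = y ∧ 0 ≤ (A x).det := by
  by_contra! hneg
  have hdet (x : E) (hx : h x = y) : (A x).det ≠ 0 := (hneg x hx).ne
  have hcompact : IsCompact (h ⁻¹' {y}) :=
    (isProperMap_of_eventuallyEq_id hh hid).isCompact_preimage isCompact_singleton
  obtain ⟨h₁, hh₁, hh₁h, hfiber⟩ := exists_continuous_contDiffAt_of_finite_fiber hh hA hdet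
    (finite_fiber_of_hasFDerivAt hcompact hA hdet)
  obtain ⟨x, hx, hxnonneg⟩ := exists_det_fderiv_nonneg_of_contDiffAt hh₁ (hh₁h.trans hid)
    fun x hx => (hfiber x hx).2.2
  rw [(hfiber x hx).2.1.fderiv] at hxnonneg
  exact hxnonneg.not_gt (hneg x (hfiber x hx).1)

lemma exists_continuous_eventuallyEq_id_eqOn_ball {k : E → E} {a : E} {R : ℝ} (hR : 0 < R)
    (hk : ContinuousOn k (Metric.ball a R))
    (hnear : ∀ x ∈ Metric.ball a R, ‖k x - x‖ ≤ 1 / 2 * ‖x - a‖) :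
    ∃ h : E → E, Continuous h ∧ h =ᶠ[cocompact E] id ∧ EqOn h k (Metric.ball a (R / 3)) ∧
      ∀ x, ‖h x - x‖ ≤ 1 / 2 * ‖x - a‖ := by
  let χ : ContDiffBump a := ⟨R / 3, 2 * R / 3, by positivity, by linarith⟩
  have hχtsupport : tsupport χ ⊆ Metric.ball a R := by
    rw [χ.tsupport_eq]
    exact Metric.closedBall_subset_ball (show 2 * R / 3 < R by linarith)
  have hχsmul : tsupport (fun x => χ x • (k x - x)) ⊆ tsupport χ :=
    closure_mono (Function.support_smul_subset_left _ _)
  refine ⟨fun x => x + χ x • (k x - x), ?_, ?_, fun x hx => ?_, fun x => ?_⟩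
  · refine continuous_id.add (continuous_of_tsupport fun x hx => ?_)
    have hkx := hk.continuousAt (Metric.isOpen_ball.mem_nhds (hχtsupport (hχsmul hx)))
    exact χ.continuous.continuousAt.smul (hkx.sub continuousAt_id)
  · filter_upwards [χ.hasCompactSupport.isCompact.compl_mem_cocompact] with x hx
    simp [image_eq_zero_of_notMem_tsupport hx]
  · simp [χ.one_of_mem_closedBall (Metric.ball_subset_closedBall hx)]
  · rw [add_sub_cancel_left]
    by_cases hx : x ∈ Metric.ball a R
    · rw [norm_smul, Real.norm_of_nonneg χ.nonneg]
      exact (mul_le_of_le_one_left (norm_nonneg _) χ.le_one).trans (hnear x hx)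
    · rw [image_eq_zero_of_notMem_tsupport fun hxχ => hx (hχtsupport hxχ), zero_smul, norm_zero]
      positivity

lemma exists_mem_ball_det_nonneg {k : E → E} {k' : E → E →L[ℝ] E} {a y : E} {R : ℝ}
    (hk : ∀ x ∈ Metric.ball a R, HasFDerivAt k (k' x) x)
    (hnear : ∀ x ∈ Metric.ball a R, ‖k x - x‖ ≤ 1 / 2 * ‖x - a‖) (hy : y ∈ Metric.ball a (R / 6)) :
    ∃ x ∈ Metric.ball a R, k x = y ∧ 0 ≤ (k' x).det := by
  have hR : 0 < R := by linarith [Metric.pos_of_mem_ball hy]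
  obtain ⟨h, hh, hid, hhk, hhnear⟩ := exists_continuous_eventuallyEq_id_eqOn_ball hR
    (fun x hx => (hk x hx).continuousAt.continuousWithinAt) hnear
  have hball (x : E) (hx : h x = y) : x ∈ Metric.ball a (R / 3) := by
    have hxnear := hhnear x
    rw [hx, norm_sub_rev] at hxnear
    rw [mem_ball_iff_norm] at hy ⊢
    linarith [norm_sub_le_norm_sub_add_norm_sub x y a]
  have hsubset : Metric.ball a (R / 3) ⊆ Metric.ball a R := Metric.ball_subset_ball (by linarith)
  obtain ⟨x, hx, hxnonneg⟩ := exists_det_nonneg_of_hasFDerivAt hh hid fun x hx =>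
    (hk x (hsubset (hball x hx))).congr_of_eventuallyEq
      (hhk.eventuallyEq_of_mem (Metric.isOpen_ball.mem_nhds (hball x hx)))
  exact ⟨x, hsubset (hball x hx), (hhk (hball x hx)).symm.trans hx, hxnonneg⟩

end Linearization

section SignChange

variable {X : Type*} [TopologicalSpace X]

/-- The points at which the sign of `φ` changes: every neighbourhood contains both a point where
`φ` is negative and a point where it is positive. It is used for Jacobian determinants, which need
not be continuous, so a sign change need not be a zero of `φ`. -/
def signChangeSet (φ : X → ℝ) : Set X :=
  closure {x | φ x < 0} ∩ closure {x | 0 < φ x}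

lemma isClosed_signChangeSet (φ : X → ℝ) : IsClosed (signChangeSet φ) :=
  isClosed_closure.inter isClosed_closure

lemma signChangeSet_const_mul {c : ℝ} (hc : c ≠ 0) (φ : X → ℝ) :
    signChangeSet (fun x => c * φ x) = signChangeSet φ := by
  unfold signChangeSet
  rcases hc.lt_or_gt with hneg | hpos
  · simp only [mul_neg_iff, mul_pos_iff, hneg, hneg.not_gt, true_and, false_and, false_or,
      inter_comm]
  · simp only [mul_neg_iff, mul_pos_iff, hpos, hpos.not_gt, true_and, false_and, or_false]

lemma inter_signChangeSet_nonempty {V : Set X} (hV : IsPreconnected V) {φ : X → ℝ}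
    (hφ : ∀ x ∈ V, φ x ≠ 0) {x y : X} (hx : x ∈ V) (hy : y ∈ V) (hφx : φ x < 0) (hφy : 0 < φ y) :
    (V ∩ signChangeSet φ).Nonempty :=
  isPreconnected_closed_iff.1 hV _ _ isClosed_closure isClosed_closure
    (fun w hw => (hφ w hw).lt_or_gt.imp (fun h => subset_closure h) fun h => subset_closure h)
    ⟨x, hx, subset_closure hφx⟩ ⟨y, hy, subset_closure hφy⟩

end SignChange

section Baire

lemma isClosed_setOf_norm_sub_sub_le {G : Type*} [SeminormedAddCommGroup G] {F : Set G}
    {g : G → G} (hg : ContinuousOn g F) (ε c : ℝ) :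
    IsClosed {x : F | ∀ y, dist y (x : G) < ε → ‖g y - g x - (y - x)‖ ≤ c * ‖y - x‖} := by
  have hgF : Continuous fun x : F => g x := hg.domRestrict
  simp only [ofPred_forall, imp_iff_not_or, not_lt, ofPred_or]
  refine isClosed_iInter fun y => IsClosed.union ?_ ?_
  · exact isClosed_le continuous_const (by fun_prop)
  · exact isClosed_le ((continuous_const.sub hgF).sub (by fun_prop)).norm (by fun_prop)

lemma eventually_norm_comp_sub_sub_le {f : E → E} {M B : E →L[ℝ] E} {x : E} {c : ℝ}
    (hf : HasFDerivAt f M x) (hB : ‖B.comp M - ContinuousLinearMap.id ℝ E‖ < c) :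
    ∀ᶠ y in 𝓝 x, ‖B (f y) - B (f x) - (y - x)‖ ≤ c * ‖y - x‖ := by
  filter_upwards [(B.hasFDerivAt.comp x hf).isLittleO.def (sub_pos.2 hB)] with y hy
  calc ‖B (f y) - B (f x) - (y - x)‖
      = ‖(B (f y) - B (f x) - B.comp M (y - x)) +
          (B.comp M - ContinuousLinearMap.id ℝ E) (y - x)‖ := by simp
    _ ≤ (c - ‖B.comp M - ContinuousLinearMap.id ℝ E‖) * ‖y - x‖ +
          ‖B.comp M - ContinuousLinearMap.id ℝ E‖ * ‖y - x‖ :=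
        norm_add_le_of_le hy (ContinuousLinearMap.le_opNorm _ _)
    _ = c * ‖y - x‖ := by ring

variable [FiniteDimensional ℝ E]

lemma exists_denseSeq_comp_sub_id_lt {M : E →L[ℝ] E} (hM : M.det ≠ 0) {ε : ℝ} (hε : 0 < ε) :
    ∃ n, (TopologicalSpace.denseSeq (E →L[ℝ] E) n).det ≠ 0 ∧
      ‖(TopologicalSpace.denseSeq (E →L[ℝ] E) n).comp M - ContinuousLinearMap.id ℝ E‖ < ε := by
  let e := M.toContinuousLinearEquivOfDetNeZero hM
  have hopen : IsOpen {B : E →L[ℝ] E |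
      B.det ≠ 0 ∧ ‖B.comp M - ContinuousLinearMap.id ℝ E‖ < ε} :=
    (isOpen_ne.preimage ContinuousLinearMap.continuous_det).inter
      (isOpen_Iio.preimage (by fun_prop : Continuous fun B : E →L[ℝ] E =>
        ‖B.comp M - ContinuousLinearMap.id ℝ E‖))
  have hinv : (e.symm : E →L[ℝ] E).comp M = ContinuousLinearMap.id ℝ E :=
    e.coe_symm_comp_coe
  exact (TopologicalSpace.denseRange_denseSeq _).exists_mem_open hopen
    ⟨e.symm, (LinearEquiv.isUnit_det' e.symm.toLinearEquiv).ne_zero, by simpa [hinv] using hε⟩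

lemma exists_uniform_norm_comp_sub_sub_le {F : Set E} (hF : IsLocallyClosed F)
    (hFne : F.Nonempty) {f : E → E} {f' : E → E →L[ℝ] E}
    (hf : ∀ x ∈ F, HasFDerivAt f (f' x) x) (hdet : ∀ x ∈ F, (f' x).det ≠ 0)
    {c : ℝ} (hc : 0 < c) :
    ∃ a ∈ F, ∃ V ∈ 𝓝 a, ∃ B : E →L[ℝ] E, B.det ≠ 0 ∧
      ∀ x ∈ F ∩ V, ∀ y ∈ V, ‖B (f y) - B (f x) - (y - x)‖ ≤ c * ‖y - x‖ := by
  have : Nonempty F := hFne.to_subtype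
  have : LocallyCompactSpace F := hF.locallyCompactSpace
  let B : {n // (TopologicalSpace.denseSeq (E →L[ℝ] E) n).det ≠ 0} → E →L[ℝ] E :=
    fun i => TopologicalSpace.denseSeq _ i
  let C : {n // (TopologicalSpace.denseSeq (E →L[ℝ] E) n).det ≠ 0} × ℕ → Set F := fun p =>
    {x | ∀ y, dist y (x : E) < 1 / (p.2 + 1 : ℝ) →
      ‖B p.1 (f y) - B p.1 (f x) - (y - x)‖ ≤ c * ‖y - x‖}
  have hclosed (p) : IsClosed (C p) := isClosed_setOf_norm_sub_sub_le
    ((B p.1).continuous.comp_continuousOn fun x hx => (hf x hx).continuousAt.continuousWithinAt)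
    _ _
  have hcover : ⋃ p, C p = univ := by
    refine eq_univ_of_forall fun x => mem_iUnion.2 ?_
    obtain ⟨i, hi, hBi⟩ := exists_denseSeq_comp_sub_id_lt (hdet x x.2) hc
    obtain ⟨ε, hε, hball⟩ := Metric.eventually_nhds_iff.1
      (eventually_norm_comp_sub_sub_le (hf x x.2) hBi)
    obtain ⟨k, hk⟩ := exists_nat_one_div_lt hε
    exact ⟨(⟨i, hi⟩, k), fun y hy => hball (hy.trans hk)⟩
  obtain ⟨⟨i, k⟩, ⟨a, ha⟩⟩ := nonempty_interior_of_iUnion_of_closed hclosed hcover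
  obtain ⟨V, hV, hVC⟩ := mem_nhds_subtype _ _ _ |>.1 (mem_interior_iff_mem_nhds.1 ha)
  refine ⟨a, a.2, V ∩ Metric.ball a (1 / (k + 1) / 2),
    inter_mem hV (Metric.ball_mem_nhds _ (by positivity)), B i, i.2, fun x hx y hy => ?_⟩
  exact hVC (show (⟨x, hx.1⟩ : F) ∈ _ from hx.2.1) y
    ((dist_triangle_right y x a).trans_lt (by linarith [hy.2.out, hx.2.2.out]))

end Baire

section Darboux

lemma eq_of_mem_segment_of_norm_sub_sub_le {g : E → E} {x z w : E} (hw : w ∈ segment ℝ x z)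
    (hx : ‖g x - g w - (x - w)‖ ≤ 1 / 2 * ‖x - w‖) (hz : ‖g z - g w - (z - w)‖ ≤ 1 / 2 * ‖z - w‖)
    (hxz : g x = g z) : x = z := by
  have hdist : ‖x - w‖ + ‖z - w‖ = ‖x - z‖ := by
    simpa only [dist_eq_norm, norm_sub_rev w z] using dist_add_dist_of_mem_segment hw
  have hle : ‖x - z‖ ≤ 1 / 2 * ‖x - z‖ := by
    calc ‖x - z‖ = ‖(g z - g w - (z - w)) - (g x - g w - (x - w))‖ := by
          rw [hxz]
          congr 1
          abel
      _ ≤ 1 / 2 * ‖z - w‖ + 1 / 2 * ‖x - w‖ := norm_sub_le_of_le hz hx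
      _ = 1 / 2 * ‖x - z‖ := by rw [← hdist]; ring
  exact sub_eq_zero.1 (norm_le_zero_iff.1 (by linarith))

variable [FiniteDimensional ℝ E]

lemma exists_det_eq_zero_of_mem_signChangeSet {g : E → E} {g' : E → E →L[ℝ] E} {a : E} {R : ℝ}
    (hR : 0 < R) (hg : ∀ x ∈ Metric.ball a R, HasFDerivAt g (g' x) x)
    (ha : a ∈ signChangeSet fun x => (g' x).det)
    (happrox : ∀ x ∈ (signChangeSet fun x => (g' x).det) ∩ Metric.ball a R,
      ∀ y ∈ Metric.ball a R, ‖g y - g x - (y - x)‖ ≤ 1 / 2 * ‖y - x‖) :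
    ∃ x ∈ Metric.ball a R, (g' x).det = 0 := by
  by_contra! hdet
  have haR : a ∈ Metric.ball a R := Metric.mem_ball_self hR
  obtain ⟨z, hzneg, hza⟩ := Metric.mem_closure_iff.1 ha.1 (R / 9) (by positivity)
  rw [dist_comm, dist_eq_norm] at hza
  have hzR : z ∈ Metric.ball a R := mem_ball_iff_norm.2 (by linarith)
  obtain ⟨x, hxR, hxz, hxnonneg⟩ : ∃ x ∈ Metric.ball a R, g x = g z ∧ 0 ≤ (g' x).det := by
    have hzball : a + (g z - g a) ∈ Metric.ball a (R / 6) := by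
      rw [mem_ball_iff_norm, add_sub_cancel_left]
      linarith [norm_le_norm_add_norm_sub' (g z - g a) (z - a), happrox a ⟨ha, haR⟩ z hzR]
    obtain ⟨x, hxR, hx, hxnonneg⟩ := exists_mem_ball_det_nonneg
      (k := fun x => a + (g x - g a)) (fun x hx => ((hg x hx).sub_const (g a)).const_add a)
      (fun x hx => by convert happrox a ⟨ha, haR⟩ x hx using 2; abel) hzball
    exact ⟨x, hxR, by simpa using hx, hxnonneg⟩
  have hsegment : segment ℝ z x ⊆ Metric.ball a R := (convex_ball a R).segment_subset hzR hxR
  obtain ⟨w, hw, hwsign⟩ := inter_signChangeSet_nonempty (convex_segment z x).isPreconnected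
    (fun w hw => hdet w (hsegment hw)) (left_mem_segment ℝ z x) (right_mem_segment ℝ z x)
    hzneg (hxnonneg.lt_of_ne' (hdet x hxR))
  have hzx : z = x := eq_of_mem_segment_of_norm_sub_sub_le hw
    (happrox w ⟨hwsign, hsegment hw⟩ z hzR) (happrox w ⟨hwsign, hsegment hw⟩ x hxR) hxz.symm
  exact (hzx ▸ hxnonneg).not_gt hzneg

theorem exists_det_eq_zero_of_det_neg_of_det_pos {U : Set E} (hU : IsOpen U)
    (hUconn : IsPreconnected U) {f : E → E} {f' : E → E →L[ℝ] E}
    (hf : ∀ x ∈ U, HasFDerivAt f (f' x) x) {x₀ x₁ : E} (hx₀ : x₀ ∈ U) (hx₁ : x₁ ∈ U)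
    (hneg : (f' x₀).det < 0) (hpos : 0 < (f' x₁).det) : ∃ x ∈ U, (f' x).det = 0 := by
  by_contra! hdet
  let φ : E → ℝ := fun x => (f' x).det
  obtain ⟨a, ⟨haU, ha⟩, V, hV, B, hB, happrox⟩ :=
    exists_uniform_norm_comp_sub_sub_le (F := U ∩ signChangeSet φ)
      (hU.isLocallyClosed.inter (isClosed_signChangeSet φ).isLocallyClosed)
      (inter_signChangeSet_nonempty hUconn hdet hx₀ hx₁ hneg hpos)
      (fun x hx => hf x hx.1) (fun x hx => hdet x hx.1) (half_pos one_pos)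
  obtain ⟨R, hR, hRUV⟩ := Metric.mem_nhds_iff.1 (inter_mem (hU.mem_nhds haU) hV)
  have hdetB (x : E) : (B.comp (f' x)).det = B.det * (f' x).det :=
    LinearMap.det_comp (B : E →ₗ[ℝ] E) (f' x : E →ₗ[ℝ] E)
  have hsign : signChangeSet (fun x => (B.comp (f' x)).det) = signChangeSet φ := by
    simp only [hdetB, signChangeSet_const_mul hB, φ]
  obtain ⟨x, hxR, hx⟩ := exists_det_eq_zero_of_mem_signChangeSet (g := fun x => B (f x)) hR
    (fun x hx => B.hasFDerivAt.comp x (hf x (hRUV hx).1)) (hsign ▸ ha)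
    fun x hx y hy => happrox x ⟨⟨(hRUV hx.2).1, hsign ▸ hx.1⟩, (hRUV hx.2).2⟩ y (hRUV hy).2
  rw [hdetB] at hx
  exact mul_ne_zero hB (hdet x (hRUV hxR).1) hx

theorem darboux_eigenvalue_right_general {U : Set E} (hU : IsOpen U) (hUconn : IsPreconnected U)
    {f : E → E} {f' : E → E →L[ℝ] E} (hf : ∀ x ∈ U, HasFDerivAt f (f' x) x)
    {x₀ x₁ : E} (hx₀ : x₀ ∈ U) (hx₁ : x₁ ∈ U) {α : ℝ} {n₀ n₁ : ℕ} (hn₀ : Odd n₀) (hn₁ : Even n₁)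
    {q₀ q₁ : ℝ → ℝ} (hq₀α : ContinuousAt q₀ α) (hq₁α : ContinuousAt q₁ α)
    (hq₀ : ∀ l : ℝ, (f' x₀ - l • ContinuousLinearMap.id ℝ E).det = q₀ l * (α - l) ^ n₀)
    (hq₁ : ∀ l : ℝ, (f' x₁ - l • ContinuousLinearMap.id ℝ E).det = q₁ l * (α - l) ^ n₁)
    (hα : 0 < q₀ α * q₁ α) :
    ∃ δ > (0 : ℝ), ∀ l ∈ Ioo α (α + δ),
      ∃ x₂ ∈ U, (f' x₂ - l • ContinuousLinearMap.id ℝ E).det = 0 := by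
  obtain ⟨δ, hδ, hpos⟩ := Metric.eventually_nhds_iff.1
    ((hq₀α.mul hq₁α).eventually (lt_mem_nhds hα))
  refine ⟨δ, hδ, fun l hl => ?_⟩
  have hderiv : ∀ x ∈ U, HasFDerivAt (fun x => f x - l • x)
      (f' x - l • ContinuousLinearMap.id ℝ E) x := fun x hx =>
    (hf x hx).sub ((hasFDerivAt_id x).const_smul l)
  have hodd : (α - l) ^ n₀ < 0 := hn₀.pow_neg (sub_neg.2 hl.1)
  have heven : 0 < (α - l) ^ n₁ := hn₁.pow_pos (sub_neg.2 hl.1).ne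
  have hopposite : (f' x₀ - l • ContinuousLinearMap.id ℝ E).det *
      (f' x₁ - l • ContinuousLinearMap.id ℝ E).det < 0 := by
    rw [hq₀, hq₁, mul_mul_mul_comm]
    refine mul_neg_of_pos_of_neg (hpos ?_) (mul_neg_of_neg_of_pos hodd heven)
    rw [Real.dist_eq, abs_of_pos (sub_pos.2 hl.1)]
    linarith [hl.2]
  rcases mul_neg_iff.1 hopposite with ⟨h₀, h₁⟩ | ⟨h₀, h₁⟩
  · exact exists_det_eq_zero_of_det_neg_of_det_pos hU hUconn hderiv hx₁ hx₀ h₁ h₀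
  · exact exists_det_eq_zero_of_det_neg_of_det_pos hU hUconn hderiv hx₀ hx₁ h₀ h₁

end Darboux

/-- If the characteristic-type polynomials at `x₀, x₁` factor as
`q₀(λ)·(α−λ)^{n₀}` with `n₀` odd and `q₁(λ)·(α−λ)^{n₁}` with `n₁` even, and
`q₀(α)·q₁(α) > 0`, then for all `λ` slightly to the right of `α` some `x₂ ∈ U`
satisfies `det (f' x₂ − λ·id) = 0`. -/
theorem darboux_eigenvalue_right
    {n : ℕ} {U : Set (EuclideanSpace ℝ (Fin n))} (hU : IsOpen U) (hUconn : IsConnected U)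
    (f : EuclideanSpace ℝ (Fin n) → EuclideanSpace ℝ (Fin n))
    (f' : EuclideanSpace ℝ (Fin n) → EuclideanSpace ℝ (Fin n) →L[ℝ] EuclideanSpace ℝ (Fin n))
    (hf : ∀ x ∈ U, HasFDerivAt f (f' x) x)
    (x₀ x₁ : EuclideanSpace ℝ (Fin n)) (hx₀ : x₀ ∈ U) (hx₁ : x₁ ∈ U)
    (α : ℝ) (n₀ n₁ : ℕ) (hn₀ : Odd n₀) (hn₁ : Even n₁)
    (q₀ q₁ : Polynomial ℝ)
    (hq₀ : ∀ l : ℝ,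
      (f' x₀ - l • ContinuousLinearMap.id ℝ (EuclideanSpace ℝ (Fin n))).det
        = q₀.eval l * (α - l) ^ n₀)
    (hq₁ : ∀ l : ℝ,
      (f' x₁ - l • ContinuousLinearMap.id ℝ (EuclideanSpace ℝ (Fin n))).det
        = q₁.eval l * (α - l) ^ n₁)
    (hα : q₀.eval α * q₁.eval α > 0) :
    ∃ δ > (0 : ℝ), ∀ l ∈ Set.Ioo α (α + δ),
      ∃ x₂ ∈ U, (f' x₂ - l • ContinuousLinearMap.id ℝ (EuclideanSpace ℝ (Fin n))).det = 0 :=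
  darboux_eigenvalue_right_general hU hUconn.isPreconnected hf hx₀ hx₁ hn₀ hn₁
    q₀.continuous.continuousAt q₁.continuous.continuousAt hq₀ hq₁ hα
end

section
/- Let U be an open subset of ℝⁿ and let f : U → ℝⁿ be differentiable without critical points, i.e. at every x ∈ U there is a continuous linear map f′(x) : ℝⁿ → ℝⁿ with HasFDerivAt f (f′(x)) x, and f′(x) is bijective. Then f is an open map: for every open set A ⊆ U, the image f(A) is open in ℝⁿ. -/
/-!
Fix `a` and a target `y` close to `f a`. As `f' a` is injective, `f` omits the value `f a` on a
punctured compact neighbourhood `K` of `a`, so `dist (f x) y` attains its minimum over `K` at an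
interior point `x`. There the derivative is surjective, so if `f x ≠ y` one could move `x` in a
direction that `f' x` sends to `y - f x` and come strictly closer to `y`; hence `f x = y`.
-/

open Filter Function Set Topology

theorem eventually_exists_isLocalMin_dist {X Y : Type*} [TopologicalSpace X] [MetricSpace Y]
    {f : X → Y} {K : Set X} {a : X} (hK : IsCompact K) (hf : ContinuousOn f K)
    (ha : a ∈ interior K) (hne : ∀ z ∈ K \ interior K, f z ≠ f a) :
    ∀ᶠ y in 𝓝 (f a), ∃ x ∈ interior K, IsLocalMin (fun z ↦ dist (f z) y) x := by
  have image_compact : IsCompact (f '' (K \ interior K)) :=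
    (hK.diff isOpen_interior).image_of_continuousOn (hf.mono sdiff_subset)
  have closer_to_center : ∀ᶠ y in 𝓝 (f a), ∀ w ∈ f '' (K \ interior K),
      dist (f a) y < dist w y := by
    refine image_compact.eventually_forall_of_forall_eventually ?_
    rintro _ ⟨z, hz, rfl⟩
    have lt_at_center : dist (f a) (f a) < dist (f z) (f a) := by
      simpa only [dist_self, dist_pos] using hne z hz
    exact (continuous_const.dist continuous_fst).continuousAt.eventually_lt
      (continuous_snd.dist continuous_fst).continuousAt lt_at_center
  filter_upwards [closer_to_center] with y hy
  exact hK.exists_isLocalMin_mem_open interior_subset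
    ((continuous_id.dist continuous_const).comp_continuousOn hf)
    (interior_subset ha) (fun z hz ↦ hy _ (mem_image_of_mem f hz)) isOpen_interior

section NormedSpace

variable {E F : Type*} [NormedAddCommGroup E] [NormedSpace ℝ E]
  [NormedAddCommGroup F] [NormedSpace ℝ F]

theorem eq_zero_of_isLocalMin_norm_of_surjective {g : E → F} {D : E →L[ℝ] F} {x : E}
    (hmin : IsLocalMin (fun z ↦ ‖g z‖) x) (hg : HasFDerivAt g D x) (hD : Surjective D) :
    g x = 0 := by
  by_contra hgx
  have norm_pos : 0 < ‖g x‖ := norm_pos_iff.2 hgx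
  obtain ⟨v, hv⟩ := hD (-g x)
  have remainder_le : ∀ᶠ t : ℝ in 𝓝 0, ‖g (x + t • v) - g x - t • D v‖ ≤ ‖g x‖ / 2 * ‖t‖ :=
    (hasLineDerivAt_iff_isLittleO_nhds_zero.1 (hg.hasLineDerivAt v)).bound (half_pos norm_pos)
  have line_tendsto : Tendsto (fun t : ℝ ↦ x + t • v) (𝓝 0) (𝓝 x) :=
    Continuous.tendsto' (by fun_prop) _ _ (by simp)
  have near_zero := remainder_le.and ((line_tendsto.eventually hmin).and (gt_mem_nhds one_pos))
  obtain ⟨t, ⟨remainder, min_le, t_lt_one⟩, t_pos : 0 < t⟩ :=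
    ((near_zero.filter_mono nhdsWithin_le_nhds).and
      (self_mem_nhdsWithin (s := Ioi (0 : ℝ)))).exists
  have strict_decrease : ‖g (x + t • v)‖ < ‖g x‖ :=
    calc ‖g (x + t • v)‖ = ‖(1 - t) • g x + (g (x + t • v) - g x - t • D v)‖ := by
          rw [hv]; congr 1; module
      _ ≤ (1 - t) * ‖g x‖ + ‖g x‖ / 2 * t := by
          refine norm_add_le_of_le ?_ ?_
          · rw [norm_smul_of_nonneg (sub_nonneg.2 t_lt_one.le)]
          · simpa only [Real.norm_of_nonneg t_pos.le] using remainder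
      _ < ‖g x‖ := by linarith [mul_pos norm_pos t_pos]
  exact strict_decrease.not_ge min_le

theorem nhds_le_map_nhds_of_eventually_ne_of_surjective_hasFDerivAt [LocallyCompactSpace E]
    {f : E → F} {a : E} (hne : ∀ᶠ x in 𝓝[≠] a, f x ≠ f a)
    (hf : ∀ᶠ x in 𝓝 a, ∃ D : E →L[ℝ] F, HasFDerivAt f D x ∧ Surjective D) :
    𝓝 (f a) ≤ map f (𝓝 a) := by
  refine le_map fun s hs ↦ ?_
  obtain ⟨K, hKa, hK, K_compact⟩ :=
    local_compact_nhds (((eventually_nhdsWithin_iff.1 hne).and hf).and hs)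
  have f_cont : ContinuousOn f K := fun x hx ↦
    let ⟨_, hD, _⟩ := (hK hx).1.2
    hD.continuousAt.continuousWithinAt
  have a_mem : a ∈ interior K := mem_interior_iff_mem_nhds.2 hKa
  have ne_on_boundary : ∀ z ∈ K \ interior K, f z ≠ f a := fun z hz ↦
    (hK hz.1).1.1 (ne_of_mem_of_not_mem a_mem hz.2).symm
  filter_upwards [eventually_exists_isLocalMin_dist K_compact f_cont a_mem ne_on_boundary]
  rintro y ⟨x, hx, hmin⟩
  obtain ⟨⟨-, D, hD, hDsurj⟩, hxs⟩ := hK (interior_subset hx)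
  simp only [dist_eq_norm] at hmin
  have sub_eq : f x - y = 0 :=
    eq_zero_of_isLocalMin_norm_of_surjective (g := fun z ↦ f z - y) hmin (hD.sub_const y) hDsurj
  exact ⟨x, hxs, sub_eq_zero.1 sub_eq⟩

theorem eventually_ne_of_injective_hasFDerivAt [FiniteDimensional ℝ E] {f : E → F}
    {D : E →L[ℝ] F} {a : E} (hf : HasFDerivAt f D a) (hD : Injective D) (c : F) :
    ∀ᶠ x in 𝓝[≠] a, f x ≠ c :=
  let ⟨K, _, hK⟩ := D.toLinearMap.exists_antilipschitzWith (LinearMap.ker_eq_bot.2 hD)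
  hf.eventually_ne ⟨K, hK⟩

theorem differentiable_no_critical_points_isOpenMap_general [FiniteDimensional ℝ E] {f : E → F}
    {s : Set E} (hs : IsOpen s)
    (hf : ∀ x ∈ s, ∃ D : E →L[ℝ] F, HasFDerivAt f D x ∧ Bijective D) : IsOpen (f '' s) := by
  rw [isOpen_iff_mem_nhds]
  rintro _ ⟨a, ha, rfl⟩
  obtain ⟨D, hD, hDbij⟩ := hf a ha
  have surjective_near : ∀ᶠ x in 𝓝 a, ∃ D : E →L[ℝ] F, HasFDerivAt f D x ∧ Surjective D := by
    filter_upwards [hs.mem_nhds ha] with x hx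
    exact (hf x hx).imp fun _ h ↦ h.imp_right Bijective.surjective
  have isolated : ∀ᶠ x in 𝓝[≠] a, f x ≠ f a :=
    eventually_ne_of_injective_hasFDerivAt hD hDbij.injective (f a)
  exact nhds_le_map_nhds_of_eventually_ne_of_surjective_hasFDerivAt isolated surjective_near
    (image_mem_map (hs.mem_nhds ha))

end NormedSpace

/-- A map on an open set `U ⊆ ℝⁿ` which is differentiable without critical points
(derivative exists and is bijective at every point, no `C¹` assumption) is open. -/
theorem differentiable_no_critical_points_isOpenMap
    {n : ℕ} {U : Set (EuclideanSpace ℝ (Fin n))} (hU : IsOpen U)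
    (f : EuclideanSpace ℝ (Fin n) → EuclideanSpace ℝ (Fin n))
    (hdiff : ∀ x ∈ U,
      ∃ D : EuclideanSpace ℝ (Fin n) →L[ℝ] EuclideanSpace ℝ (Fin n),
        HasFDerivAt f D x ∧ Function.Bijective D) :
    ∀ A : Set (EuclideanSpace ℝ (Fin n)), A ⊆ U → IsOpen A → IsOpen (f '' A) := by
  intro A hAU hA
  exact differentiable_no_critical_points_isOpenMap_general hA fun x hx ↦ hdiff x (hAU hx)
end

section
/- Let X be a locally path-connected Hausdorff topological space, let U be an open subset of ℝⁿ, and let f : X × U → ℝⁿ be continuous. Suppose that for every x ∈ X the map f_x : U → ℝⁿ defined by f_x(y) = f(x,y) is differentiable (not necessarily C¹) and without critical points, i.e. at every y ∈ U it has a Fréchet derivative that is a bijective linear map ℝⁿ → ℝⁿ. Fix (x₀, y₀) ∈ X × U and set z₀ = f(x₀, y₀). Then there exist a neighborhood V of x₀ in X and a compact set K ⊆ U that is a neighborhood of y₀, such that for every x ∈ V there is exactly one y ∈ K with f(x, y) = z₀. -/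
/-!
A continuous map that moves no point of a closed ball by as much as the radius attains the center
(Brouwer, by the Milnor–Rogers argument: the volume of the image of a ball under `id + t • g` is a
polynomial in `t`). Hence a map with an invertible derivative at a point is open there.

Consequently, over a ball on which a differentiable map without critical points is already locally
injective, it is a covering with continuous sections. If a second map, injective and uniformly close
to the first, is composed with these sections, each composition attains the center of a smaller
ball, so all sections pass through the same point and therefore coincide.

By Baire's theorem, some point at which local injectivity fails would have a neighborhood in which
the map expands distances from all such points by a uniform factor. Comparing the map, over a
ball touching the image of one of these points, with its linear approximation there yields local
injectivity after all. Thus each `f (x, ·)` is a local homeomorphism, and comparing it with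
`f (x₀, ·)` in the same way gives existence and uniqueness of the solution.
-/

open Set Filter Topology Metric MeasureTheory Module
open scoped Polynomial NNReal

lemma exists_polynomial_eval_eq_det_one_add_smul {R M : Type*} [CommRing R] [Nontrivial R]
    [AddCommGroup M] [Module R M] [Module.Free R M] [Module.Finite R M] (A : M →ₗ[R] M) :
    ∃ p : R[X], p.natDegree ≤ finrank R M ∧ ∀ t, p.eval t = LinearMap.det (1 + t • A) := by
  let b := finBasis R M
  let N : Matrix (Fin (finrank R M)) (Fin (finrank R M)) R := LinearMap.toMatrix b b A
  refine ⟨((Polynomial.X : R[X]) • N.map Polynomial.C +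
      (1 : Matrix (Fin (finrank R M)) (Fin (finrank R M)) R).map Polynomial.C).det,
    (Polynomial.natDegree_det_X_add_C_le N 1).trans_eq (Fintype.card_fin _), fun t => ?_⟩
  have toMatrix_eq : LinearMap.toMatrix b b (1 + t • A) = t • N + 1 := by
    rw [map_add, map_smul, LinearMap.toMatrix_one, add_comm]
  rw [← LinearMap.det_toMatrix b, toMatrix_eq, ← Polynomial.coe_evalRingHom, RingHom.map_det]
  congr 1
  ext i j
  rcases eq_or_ne i j with rfl | hij
  · simpa using mul_comm _ _
  · simpa [hij] using mul_comm _ _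

-- Interpolation at finitely many nodes of `S` expresses the integral at `t` through those at `S`.
lemma integral_eval_eq_of_infinite {α : Type*} [MeasurableSpace α] {μ : Measure α}
    {p : α → ℝ[X]} {d : ℕ} (hdeg : ∀ x, (p x).natDegree ≤ d) {S : Set ℝ} (hS : S.Infinite)
    (hint : ∀ t ∈ S, Integrable (fun x => (p x).eval t) μ) {c : ℝ}
    (hc : ∀ t ∈ S, ∫ x, (p x).eval t ∂μ = c) (t : ℝ) : ∫ x, (p x).eval t ∂μ = c := by
  obtain ⟨nodes, hnodes, hcard⟩ := hS.exists_subset_card_eq (d + 1)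
  let ℓ : ℝ → ℝ := fun u => (Lagrange.basis nodes id u).eval t
  have interpolation (x : α) : (p x).eval t = ∑ u ∈ nodes, (p x).eval u * ℓ u := by
    have hlt : (p x).degree < nodes.card := by
      rw [hcard]
      exact Polynomial.degree_le_natDegree.trans_lt (mod_cast Nat.lt_succ_of_le (hdeg x))
    conv_lhs => rw [Lagrange.eq_interpolate (v := id) (injOn_id _) hlt]
    simp [ℓ, Lagrange.interpolate_apply, Polynomial.eval_finsetSum]
  have sum_basis : ∑ u ∈ nodes, ℓ u = 1 := by
    have hne : nodes.Nonempty := Finset.card_pos.1 (by omega)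
    simpa [ℓ, Polynomial.eval_finsetSum] using
      congrArg (Polynomial.eval t) (Lagrange.sum_basis (s := nodes) (v := id) (injOn_id _) hne)
  calc ∫ x, (p x).eval t ∂μ
      = ∑ u ∈ nodes, (∫ x, (p x).eval u ∂μ) * ℓ u := by
        simp_rw [interpolation, ← integral_mul_const]
        exact integral_finsetSum _ fun u hu => (hint u (hnodes hu)).mul_const _
    _ = ∑ u ∈ nodes, c * ℓ u := Finset.sum_congr rfl fun u hu => by rw [hc u (hnodes hu)]
    _ = c := by rw [← Finset.mul_sum, sum_basis, mul_one]

lemma image_eq_self_of_isOpen_image {T : Type*} [TopologicalSpace T] [T2Space T] {s : Set T}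
    {F : T → T} (hs : IsPreconnected s) (hcompact : IsCompact (closure s))
    (hF : ContinuousOn F (closure s)) (hmaps : MapsTo F s s) (hopen : IsOpen (F '' s))
    (hbdry : ∀ x ∈ closure s \ s, F x = x) : F '' s = s := by
  rcases s.eq_empty_or_nonempty with rfl | ⟨x₀, hx₀⟩
  · exact image_empty F
  have hclosure : closure (F '' s) ⊆ F '' closure s :=
    closure_minimal (image_mono subset_closure) (hcompact.image_of_continuousOn hF).isClosed
  refine hmaps.image_subset.antisymm (hs.subset_of_closure_inter_subset hopen
    ⟨F x₀, hmaps hx₀, mem_image_of_mem F hx₀⟩ ?_)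
  rintro y ⟨hy, hys⟩
  obtain ⟨x, hx, rfl⟩ := hclosure hy
  by_cases hxs : x ∈ s
  · exact mem_image_of_mem F hxs
  · exact absurd (hbdry x ⟨hx, hxs⟩ ▸ hys) hxs

section Normed

variable {E : Type*} [NormedAddCommGroup E] [NormedSpace ℝ E]

lemma det_id_add_pos_of_norm_lt_one [CompleteSpace E] {B : E →L[ℝ] E} (hB : ‖B‖ < 1) :
    0 < (ContinuousLinearMap.id ℝ E + B).det := by
  have det_ne_zero : ∀ t ∈ Icc (0 : ℝ) 1, (ContinuousLinearMap.id ℝ E + t • B).det ≠ 0 := by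
    intro t ht
    have hnorm : ‖-(t • B)‖ < 1 := by
      rw [norm_neg, norm_smul, Real.norm_of_nonneg ht.1]
      exact (mul_le_of_le_one_left (norm_nonneg B) ht.2).trans_lt hB
    have hunit : IsUnit (ContinuousLinearMap.id ℝ E + t • B) := by
      have h := isUnit_one_sub_of_norm_lt_one hnorm
      rwa [sub_neg_eq_add] at h
    exact (LinearMap.isUnit_det _ (hunit.map ContinuousLinearMap.toLinearMapRingHom)).ne_zero
  by_contra! hneg
  have hcont : ContinuousOn (fun t : ℝ => (ContinuousLinearMap.id ℝ E + t • B).det) (Icc 0 1) :=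
    (ContinuousLinearMap.continuous_det.comp (by fun_prop)).continuousOn
  obtain ⟨t, ht, hzero⟩ := intermediate_value_Icc' zero_le_one hcont
    ⟨by simpa using hneg, by simp [ContinuousLinearMap.det]⟩
  exact det_ne_zero t ht hzero

lemma continuous_det_id_add_smul_fderiv {g : E → E} (hg : ContDiff ℝ 1 g)
    (t : ℝ) : Continuous fun x => (ContinuousLinearMap.id ℝ E + t • fderiv ℝ g x).det := by
  have := hg.continuous_fderiv one_ne_zero
  exact ContinuousLinearMap.continuous_det.comp (by fun_prop)

lemma approximatesLinearOn_add_of_lipschitzOnWith {g : E → E} {K : ℝ≥0} {s : Set E}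
    (hg : LipschitzOnWith K g s) :
    ApproximatesLinearOn (fun x => x + g x) (ContinuousLinearEquiv.refl ℝ E : E →L[ℝ] E) s K :=
  LipschitzOnWith.approximatesLinearOn (by convert hg using 1; ext x; simp)

lemma subsingleton_or_lt_inv_nnnorm_refl {K : ℝ≥0} (hK : K < 1) :
    Subsingleton E ∨ K < ‖((ContinuousLinearEquiv.refl ℝ E).symm : E →L[ℝ] E)‖₊⁻¹ := by
  rcases subsingleton_or_nontrivial E with h | h
  · exact Or.inl h
  · exact Or.inr (by simpa using hK)

lemma injOn_add_of_lipschitzOnWith {g : E → E} {K : ℝ≥0} {s : Set E} (hK : K < 1)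
    (hg : LipschitzOnWith K g s) : InjOn (fun x => x + g x) s :=
  (approximatesLinearOn_add_of_lipschitzOnWith hg).injOn (subsingleton_or_lt_inv_nnnorm_refl hK)

lemma isOpen_image_add_of_lipschitzOnWith [CompleteSpace E] {g : E → E} {K : ℝ≥0} {s : Set E}
    (hK : K < 1) (hs : IsOpen s) (hg : LipschitzOnWith K g s) :
    IsOpen ((fun x => x + g x) '' s) :=
  (approximatesLinearOn_add_of_lipschitzOnWith hg).open_image
    (ContinuousLinearEquiv.refl ℝ E).toNonlinearRightInverse hs
    (subsingleton_or_lt_inv_nnnorm_refl hK)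

lemma mapsTo_ball_add_smul_sub {f : E → E} {R : ℝ} (hf : MapsTo f (ball 0 R) (closedBall 0 R))
    {t : ℝ} (ht₀ : 0 ≤ t) (ht₁ : t < 1) :
    MapsTo (fun x => x + t • (f x - x)) (ball 0 R) (ball 0 R) := by
  intro x hx
  have hfx : ‖f x‖ ≤ R := mem_closedBall_zero_iff.1 (hf hx)
  rw [mem_ball_zero_iff] at hx ⊢
  calc ‖x + t • (f x - x)‖ = ‖(1 - t) • x + t • f x‖ := by congr 1; module
    _ ≤ ‖(1 - t) • x‖ + ‖t • f x‖ := norm_add_le _ _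
    _ = (1 - t) * ‖x‖ + t * ‖f x‖ := by
      rw [norm_smul_of_nonneg (sub_nonneg.2 ht₁.le), norm_smul_of_nonneg ht₀]
    _ < R := by nlinarith

variable [FiniteDimensional ℝ E] [MeasurableSpace E] [BorelSpace E]

lemma setIntegral_det_id_add_eq_measureReal (μ : Measure E) [μ.IsAddHaarMeasure] {s : Set E}
    (hs : IsOpen s) (hconn : IsPreconnected s) (hcompact : IsCompact (closure s)) {g : E → E}
    {g' : E → E →L[ℝ] E} (hderiv : ∀ x ∈ s, HasFDerivAt g (g' x) x) {K : ℝ≥0} (hK : K < 1)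
    (hg : LipschitzOnWith K g (closure s)) (hmaps : MapsTo (fun x => x + g x) s s)
    (hbdry : ∀ x ∈ closure s \ s, g x = 0) :
    ∫ x in s, (ContinuousLinearMap.id ℝ E + g' x).det ∂μ = μ.real s := by
  have hgs : LipschitzOnWith K g s := hg.mono subset_closure
  have det_pos (x) (hx : x ∈ s) : 0 < (ContinuousLinearMap.id ℝ E + g' x).det :=
    det_id_add_pos_of_norm_lt_one
      (((hderiv x hx).le_of_lipschitzOn (hs.mem_nhds hx) hgs).trans_lt hK)
  have hasFDeriv (x) (hx : x ∈ s) : HasFDerivWithinAt (fun x => x + g x)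
      (ContinuousLinearMap.id ℝ E + g' x) s x :=
    ((hasFDerivAt_id x).add (hderiv x hx)).hasFDerivWithinAt
  have image_eq : (fun x => x + g x) '' s = s :=
    image_eq_self_of_isOpen_image hconn hcompact (continuousOn_id.add hg.continuousOn) hmaps
      (isOpen_image_add_of_lipschitzOnWith hK hs hgs) fun x hx => by rw [hbdry x hx, add_zero]
  calc ∫ x in s, (ContinuousLinearMap.id ℝ E + g' x).det ∂μ
      = ∫ x in s, |(ContinuousLinearMap.id ℝ E + g' x).det| • (1 : ℝ) ∂μ :=
        setIntegral_congr_fun hs.measurableSet fun x hx => by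
          simp only [smul_eq_mul, mul_one, abs_of_pos (det_pos x hx)]
    _ = ∫ _ in (fun x => x + g x) '' s, (1 : ℝ) ∂μ :=
        (integral_image_eq_integral_abs_det_fderiv_smul μ hs.measurableSet
          hasFDeriv (injOn_add_of_lipschitzOnWith hK hgs) fun _ => (1 : ℝ)).symm
    _ = μ.real s := by rw [image_eq]; simp

lemma setIntegral_det_id_add_smul_fderiv (μ : Measure E)
    [μ.IsAddHaarMeasure] {f : E → E} {R : ℝ} (hf : Differentiable ℝ f) (hR : R ≠ 0)
    (hmaps : MapsTo f (ball 0 R) (closedBall 0 R)) (hfix : ∀ x ∈ sphere 0 R, f x = x) {K : ℝ≥0}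
    (hK : LipschitzOnWith K (fun x => f x - x) (closedBall 0 R)) {t : ℝ} (ht₀ : 0 ≤ t) (ht₁ : t < 1)
    (htK : t * K < 1) :
    ∫ x in ball 0 R, (ContinuousLinearMap.id ℝ E + t • fderiv ℝ (fun x => f x - x) x).det ∂μ =
      μ.real (ball 0 R) := by
  have closure_eq : closure (ball (0 : E) R) = closedBall 0 R := closure_ball 0 hR
  refine setIntegral_det_id_add_eq_measureReal μ isOpen_ball (convex_ball 0 R).isPreconnected
    (by rw [closure_eq]; exact isCompact_closedBall 0 R)
    (g := fun x => t • (f x - x)) (K := ‖t‖₊ * K)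
    (fun x _ => ((hf x).sub differentiableAt_id).hasFDerivAt.const_smul t) ?_ ?_
    (mapsTo_ball_add_smul_sub hmaps ht₀ ht₁) ?_
  · rw [← NNReal.coe_lt_coe]
    simpa [abs_of_nonneg ht₀] using htK
  · rw [closure_eq]
    exact (lipschitzWith_smul t).comp_lipschitzOnWith hK
  · rw [closure_eq, closedBall_sdiff_ball]
    intro x hx
    simp only [hfix x hx, sub_self, smul_zero]

end Normed

section InnerProduct

variable {E : Type*} [NormedAddCommGroup E] [InnerProductSpace ℝ E] [FiniteDimensional ℝ E]

lemma det_eq_zero_of_norm_eq_const {f : E → E} {D : E →L[ℝ] E} {x : E} {R : ℝ}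
    (hf : HasFDerivAt f D x) (hR : R ≠ 0) (hnorm : ∀ y, ‖f y‖ = R) : D.det = 0 := by
  by_contra hdet
  obtain ⟨v, hv⟩ : ∃ v, D v = f x := (LinearMap.equivOfDetNeZero (D : E →ₗ[ℝ] E) hdet).surjective _
  have norm_sq_deriv : HasFDerivAt (fun _ : E => R ^ 2) (2 • (innerSL ℝ (f x)).comp D) x := by
    simpa only [hnorm] using hf.norm_sq
  have inner_eq_zero : inner ℝ (f x) (f x) = (0 : ℝ) := by
    simpa [hv] using DFunLike.congr_fun (norm_sq_deriv.unique (hasFDerivAt_const _ x)) v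
  exact hR (by rw [← hnorm x, inner_self_eq_zero.1 inner_eq_zero, norm_zero])

theorem exists_mem_sphere_ne_of_norm_eq {f : E → E} {R : ℝ} (hf : ContDiff ℝ 1 f) (hR : 0 < R)
    (hnorm : ∀ x, ‖f x‖ = R) : ∃ x ∈ sphere (0 : E) R, f x ≠ x := by
  by_contra! hfix
  borelize E
  let g : E → E := fun x => f x - x
  have hg : ContDiff ℝ 1 g := hf.sub contDiff_id
  obtain ⟨K, hK⟩ := hg.contDiffOn.exists_lipschitzOnWith one_ne_zero (convex_closedBall 0 R)
    (isCompact_closedBall 0 R)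
  choose p hdeg heval using fun x =>
    exists_polynomial_eval_eq_det_one_add_smul (fderiv ℝ g x : E →ₗ[ℝ] E)
  have eval_eq (t : ℝ) (x : E) :
      (p x).eval t = (ContinuousLinearMap.id ℝ E + t • fderiv ℝ g x).det := heval x t
  have integral_small (t : ℝ) (ht : t ∈ Ioo 0 (1 / ((K : ℝ) + 1))) :
      ∫ x in ball 0 R, (p x).eval t = volume.real (ball (0 : E) R) := by
    have htK : t * (K + 1) < 1 := (lt_div_iff₀ (by positivity)).1 ht.2
    simp_rw [eval_eq]
    exact setIntegral_det_id_add_smul_fderiv volume (hf.differentiable one_ne_zero) hR.ne'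
      (fun x _ => by simp [hnorm x]) hfix hK ht.1.le
      (by nlinarith [K.coe_nonneg, ht.1]) (by nlinarith [ht.1])
  have integrable (t : ℝ) : IntegrableOn (fun x => (p x).eval t) (ball 0 R) := by
    simp_rw [eval_eq]
    exact ((continuous_det_id_add_smul_fderiv hg t).continuousOn.integrableOn_compact
      (isCompact_closedBall 0 R)).mono_set ball_subset_closedBall
  have eval_one (x : E) : (p x).eval 1 = 0 := by
    have hderiv : HasFDerivAt f (ContinuousLinearMap.id ℝ E + (1 : ℝ) • fderiv ℝ g x) x := by
      convert (hasFDerivAt_id x).add (hg.differentiable one_ne_zero x).hasFDerivAt using 1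
      · ext; simp [g]
      · rw [one_smul]
    rw [eval_eq, det_eq_zero_of_norm_eq_const hderiv hR.ne' hnorm]
  have hvol : 0 < volume.real (ball (0 : E) R) :=
    ENNReal.toReal_pos (measure_ball_pos _ 0 hR).ne' measure_ball_lt_top.ne
  refine hvol.ne ?_
  rw [← integral_eval_eq_of_infinite hdeg (Ioo_infinite (by positivity))
    (fun t _ => integrable t) integral_small 1]
  simp [eval_one]

lemma exists_add_eq_zero_of_hasCompactSupport {k : E → E} (hk : Continuous k)
    (hsupp : HasCompactSupport k) : ∃ x, x + k x = 0 := by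
  by_contra! hne
  obtain ⟨g, hg, hclose, hsub⟩ := hk.exists_contDiff_approx 1 (ε := fun x => ‖x + k x‖)
    (by fun_prop) fun x => norm_pos_iff.2 (hne x)
  have hgne (x : E) : x + g x ≠ 0 := by
    intro hzero
    have hlt := hclose x
    rw [eq_neg_of_add_eq_zero_right hzero, dist_eq_norm, ← norm_neg] at hlt
    simp [add_comm] at hlt
  obtain ⟨R, hR, hvanish⟩ := (hsupp.mono hsub).exists_pos_le_norm
  have hadd : ContDiff ℝ 1 fun x => x + g x := contDiff_id.add hg
  have hinv : ContDiff ℝ 1 fun x => ‖x + g x‖⁻¹ :=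
    (hadd.norm ℝ hgne).inv fun x => norm_ne_zero_iff.2 (hgne x)
  obtain ⟨x, hx, hmoved⟩ := exists_mem_sphere_ne_of_norm_eq
    (f := fun x => (R * ‖x + g x‖⁻¹) • (x + g x)) ((contDiff_const.mul hinv).smul hadd) hR
    fun x => by
      rw [norm_smul, norm_mul, norm_inv, norm_norm, Real.norm_of_nonneg hR.le,
        inv_mul_cancel_right₀ (norm_ne_zero_iff.2 (hgne x))]
  rw [mem_sphere_zero_iff_norm] at hx
  refine hmoved ?_
  simp only [hvanish x hx.ge, add_zero, hx, mul_inv_cancel₀ hR.ne', one_smul]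

end InnerProduct

section Brouwer

variable {E : Type*} [NormedAddCommGroup E] [NormedSpace ℝ E] [FiniteDimensional ℝ E]

lemma surjective_add_of_hasCompactSupport {k : E → E} (hk : Continuous k)
    (hsupp : HasCompactSupport k) : Function.Surjective fun x => x + k x := by
  intro c
  let L : E ≃L[ℝ] EuclideanSpace ℝ (Fin (finrank ℝ E)) := toEuclidean
  let e : EuclideanSpace ℝ (Fin (finrank ℝ E)) ≃ₜ E :=
    L.symm.toHomeomorph.trans (Homeomorph.addLeft c)
  obtain ⟨v, hv⟩ := exists_add_eq_zero_of_hasCompactSupport (k := fun v => L (k (e v)))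
    (by fun_prop) ((hsupp.comp_homeomorph e).comp_left (map_zero L))
  refine ⟨e v, ?_⟩
  calc e v + k (e v) = c + L.symm (v + L (k (e v))) := by simp [e, add_assoc]
    _ = c := by rw [hv, map_zero, add_zero]

theorem exists_eq_center_of_norm_sub_lt {φ : E → E} {c : E} {R : ℝ} (hR : 0 ≤ R)
    (hφ : ContinuousOn φ (closedBall c R)) (hclose : ∀ w ∈ closedBall c R, ‖φ w - w‖ < R) :
    ∃ w ∈ closedBall c R, φ w = c := by
  obtain ⟨w₀, hw₀, hmax⟩ := (isCompact_closedBall c R).exists_isMaxOn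
    (nonempty_closedBall.2 hR) (hφ.sub continuousOn_id).norm
  obtain ⟨r, hr, hrR⟩ := exists_between (hclose w₀ hw₀)
  obtain ⟨r', hrr', hr'R⟩ := exists_between hrR
  have hrpos : 0 < r := (norm_nonneg _).trans_lt hr
  let χ : ContDiffBump c := ⟨r, r', hrpos, hrr'⟩
  let k : E → E := fun x => χ x • (φ x - x)
  have htsupport : tsupport k ⊆ closedBall c r' :=
    (tsupport_smul_subset_left _ _).trans χ.tsupport_eq.subset
  have hcont : Continuous k := by
    refine ContinuousOn.continuous_of_tsupport_subset (s := ball c R) ?_ isOpen_ball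
      (htsupport.trans (closedBall_subset_ball hr'R))
    exact χ.continuous.continuousOn.smul ((hφ.mono ball_subset_closedBall).sub continuousOn_id)
  obtain ⟨x, hx⟩ := surjective_add_of_hasCompactSupport hcont
    ((isCompact_closedBall c r').of_isClosed_subset (isClosed_tsupport k) htsupport) c
  have hxc : x ∈ closedBall c r := by
    rw [mem_closedBall, dist_eq_norm, ← hx, sub_add_cancel_left, norm_neg]
    by_cases hxR : x ∈ closedBall c R
    · calc ‖k x‖ = χ x * ‖φ x - x‖ := norm_smul_of_nonneg χ.nonneg _
        _ ≤ ‖φ x - x‖ := mul_le_of_le_one_left (norm_nonneg _) χ.le_one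
        _ ≤ r := (hmax hxR).trans hr.le
    · have hkx : k x = 0 := image_eq_zero_of_notMem_tsupport fun hmem =>
        hxR (closedBall_subset_closedBall hr'R.le (htsupport hmem))
      simpa [hkx] using hrpos.le
  refine ⟨x, closedBall_subset_closedBall hrR.le hxc, ?_⟩
  simpa [k, χ.one_of_mem_closedBall hxc] using hx

end Brouwer

section OpenMapping

variable {E F : Type*} [NormedAddCommGroup E] [NormedSpace ℝ E]
  [NormedAddCommGroup F] [NormedSpace ℝ F]

/-- `f` has an invertible Fréchet derivative at every point of `U`, with no regularity asked of the
derivative: the maps the paper calls differentiable without critical points. -/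
def HasInvertibleFDerivOn (f : E → F) (U : Set E) : Prop :=
  ∀ y ∈ U, ∃ D : E ≃L[ℝ] F, HasFDerivAt f (D : E →L[ℝ] F) y

namespace HasInvertibleFDerivOn

variable {f : E → F} {U : Set E}

lemma continuousAt (hf : HasInvertibleFDerivOn f U) {y : E} (hy : y ∈ U) : ContinuousAt f y := by
  obtain ⟨D, hD⟩ := hf y hy
  exact hD.continuousAt

lemma continuousOn (hf : HasInvertibleFDerivOn f U) : ContinuousOn f U := fun _ hy =>
  (hf.continuousAt hy).continuousWithinAt

end HasInvertibleFDerivOn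

variable [FiniteDimensional ℝ E]

lemma nhds_le_map_of_hasFDerivAt_id {f : E → E} {p : E}
    (hf : HasFDerivAt f (ContinuousLinearMap.id ℝ E) p) (hcont : ∀ᶠ y in 𝓝 p, ContinuousAt f y) :
    𝓝 (f p) ≤ map f (𝓝 p) := by
  have happrox : ∀ᶠ y in 𝓝 p, ‖f y - f p - (y - p)‖ ≤ 1 / 2 * ‖y - p‖ :=
    hf.isLittleO.def one_half_pos
  intro s hs
  obtain ⟨R, hR, hball⟩ :=
    nhds_basis_closedBall.eventually_iff.1 (hcont.and (happrox.and hs))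
  filter_upwards [ball_mem_nhds (f p) (half_pos hR)] with z hz
  have hφ : ContinuousOn (fun y => p + (f y - z)) (closedBall p R) := fun y hy =>
    (continuousAt_const.add ((hball hy).1.sub continuousAt_const)).continuousWithinAt
  obtain ⟨y, hy, hyz⟩ := exists_eq_center_of_norm_sub_lt hR.le hφ fun y hy => by
    calc ‖p + (f y - z) - y‖ = ‖(f y - f p - (y - p)) + (f p - z)‖ := by congr 1; abel
      _ ≤ ‖f y - f p - (y - p)‖ + ‖f p - z‖ := norm_add_le _ _
      _ < R / 2 + R / 2 := by
        refine add_lt_add_of_le_of_lt ((hball hy).2.1.trans ?_) (mem_ball_iff_norm'.1 hz)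
        linarith [mem_closedBall_iff_norm.1 hy]
      _ = R := add_halves R
  exact sub_eq_zero.1 (add_eq_left.1 hyz) ▸ (hball hy).2.2

lemma nhds_le_map_of_hasFDerivAt_equiv {f : E → F} {D : E ≃L[ℝ] F} {p : E}
    (hf : HasFDerivAt f (D : E →L[ℝ] F) p) (hcont : ∀ᶠ y in 𝓝 p, ContinuousAt f y) :
    𝓝 (f p) ≤ map f (𝓝 p) := by
  have hderiv : HasFDerivAt (D.symm ∘ f) (ContinuousLinearMap.id ℝ E) p := by
    simpa using D.symm.comp_hasFDerivAt_iff.2 hf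
  have hcont' : ∀ᶠ y in 𝓝 p, ContinuousAt (D.symm ∘ f) y :=
    hcont.mono fun y hy => D.symm.continuous.continuousAt.comp hy
  calc 𝓝 (f p) = map D (𝓝 (D.symm (f p))) := by
        rw [← D.coe_toHomeomorph, D.toHomeomorph.map_nhds_eq]; simp
    _ ≤ map D (map (D.symm ∘ f) (𝓝 p)) := map_mono (nhds_le_map_of_hasFDerivAt_id hderiv hcont')
    _ = map f (𝓝 p) := by rw [map_map]; congr 1; ext y; simp

lemma HasInvertibleFDerivOn.nhds_le_map {f : E → F} {U : Set E} (hf : HasInvertibleFDerivOn f U)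
    (hU : IsOpen U) {y : E} (hy : y ∈ U) : 𝓝 (f y) ≤ map f (𝓝 y) := by
  obtain ⟨D, hD⟩ := hf y hy
  exact nhds_le_map_of_hasFDerivAt_equiv hD <|
    (hU.eventually_mem hy).mono fun _ => hf.continuousAt

end OpenMapping

section Sections

variable {X Y : Type*} [TopologicalSpace X] [TopologicalSpace Y] {f : X → Y}

lemma isLocalHomeomorphOn_of_nhds_le_map {U : Set X} (hU : IsOpen U) (hf : ContinuousOn f U)
    (hopen : ∀ y ∈ U, 𝓝 (f y) ≤ map f (𝓝 y)) (hinj : ∀ y ∈ U, ∃ W ∈ 𝓝 y, InjOn f W) :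
    IsLocalHomeomorphOn f U := by
  rw [isLocalHomeomorphOn_iff_isOpenEmbedding_restrict]
  intro y hy
  obtain ⟨W, hW, hWinj⟩ := hinj y hy
  let O := U ∩ interior W
  have hO : IsOpen O := hU.inter isOpen_interior
  refine ⟨O, hO.mem_nhds ⟨hy, mem_interior_iff_mem_nhds.2 hW⟩,
    isOpenEmbedding_iff_continuous_injective_isOpenMap.2 ⟨?_, ?_, ?_⟩⟩
  · exact (hf.mono inter_subset_left).domRestrict
  · exact (hWinj.mono (inter_subset_right.trans interior_subset)).injective
  · refine IsOpenMap.of_nhds_le fun a => ?_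
    have hmap : map (O.domRestrict f) (𝓝 a) = map f (𝓝 a) := by
      rw [← map_nhds_subtype_coe_eq_nhds a.2 (hO.mem_nhds a.2), map_map]; rfl
    exact hmap ▸ hopen a a.2.1

lemma isCoveringMapOn_domRestrict [T2Space X] [T2Space Y] {K : Set X} {V : Set Y}
    (hK : IsCompact K) (hf : ContinuousOn f K) (hint : K ∩ f ⁻¹' V ⊆ interior K)
    (hloc : IsLocalHomeomorphOn f (K ∩ f ⁻¹' V)) : IsCoveringMapOn (K.domRestrict f) V := by
  have : CompactSpace K := isCompact_iff_compactSpace.1 hK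
  have hval : IsLocalHomeomorphOn (Subtype.val : K → X) (Subtype.val ⁻¹' interior K) :=
    isLocalHomeomorphOn_of_nhds_le_map (isOpen_interior.preimage continuous_subtype_val)
      continuous_subtype_val.continuousOn
      (fun y hy => (map_nhds_subtype_coe_eq_nhds y.2 (mem_interior_iff_mem_nhds.1 hy)).ge)
      fun _ _ => ⟨univ, univ_mem, Subtype.val_injective.injOn⟩
  exact .of_isLocalHomeomorphOn hf.domRestrict
    (hloc.comp (hval.mono fun y hy => hint ⟨y.2, hy⟩) fun y hy => ⟨y.2, hy⟩)

/-- `s` is a continuous section of `f` over `V` with values in `K`. Values of `s` outside `V` are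
irrelevant. -/
structure IsSectionOn (f : X → Y) (K : Set X) (V : Set Y) (s : Y → X) : Prop where
  continuousOn : ContinuousOn s V
  mapsTo : MapsTo s V K
  rightInvOn : RightInvOn s f V

variable {K : Set X} {V : Set Y} [SimplyConnectedSpace V] [LocallyPathConnectedSpace V]

lemma exists_isSectionOn_apply_eq (hcov : IsCoveringMapOn (K.domRestrict f) V) {y : X} (hy : y ∈ K)
    (hfy : f y ∈ V) : ∃ s, IsSectionOn f K V s ∧ s (f y) = y := by
  obtain ⟨Φ, ⟨hbase, hlift⟩, -⟩ := hcov.existsUnique_continuousMap_lifts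
    ⟨Subtype.val, continuous_subtype_val⟩ (a₀ := (⟨f y, hfy⟩ : V)) (e₀ := ⟨y, hy⟩) rfl fun v => v.2
  let s : Y → X := Function.extend Subtype.val (fun v => (Φ v : X)) fun _ => y
  have hs (v : V) : s v = Φ v := Subtype.val_injective.extend_apply _ _ v
  refine ⟨s, ⟨?_, fun v hv => ?_, fun v hv => ?_⟩, ?_⟩
  · rw [continuousOn_iff_continuous_domRestrict]
    exact (continuous_subtype_val.comp Φ.continuous).congr fun v => (hs v).symm
  · exact hs ⟨v, hv⟩ ▸ (Φ ⟨v, hv⟩).2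
  · exact hs ⟨v, hv⟩ ▸ congrFun hlift ⟨v, hv⟩
  · rw [hs ⟨f y, hfy⟩, hbase]

lemma IsSectionOn.eqOn (hcov : IsCoveringMapOn (K.domRestrict f) V) {s₁ s₂ : Y → X}
    (h₁ : IsSectionOn f K V s₁) (h₂ : IsSectionOn f K V s₂) {v : Y} (hv : v ∈ V)
    (heq : s₁ v = s₂ v) : EqOn s₁ s₂ V := by
  let toMap {s : Y → X} (h : IsSectionOn f K V s) : C(V, K) :=
    ⟨h.mapsTo.restrict s V K, h.continuousOn.mapsToRestrict h.mapsTo⟩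
  have hmap : toMap h₁ = toMap h₂ :=
    (hcov.existsUnique_continuousMap_lifts ⟨Subtype.val, continuous_subtype_val⟩
      (a₀ := (⟨v, hv⟩ : V)) (e₀ := ⟨s₁ v, h₁.mapsTo hv⟩) (h₁.rightInvOn hv) fun v => v.2).unique
      ⟨rfl, funext fun w => h₁.rightInvOn w.2⟩
      ⟨Subtype.ext heq.symm, funext fun w => h₂.rightInvOn w.2⟩
  exact fun w hw => congrArg (fun Φ : C(V, K) => (Φ ⟨w, hw⟩ : X)) hmap

lemma injOn_of_sections_meet (hcov : IsCoveringMapOn (K.domRestrict f) V)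
    (hmeet : ∀ s₁ s₂, IsSectionOn f K V s₁ → IsSectionOn f K V s₂ →
      (s₁ '' V ∩ s₂ '' V).Nonempty) : InjOn f (K ∩ f ⁻¹' V) := by
  rintro y₁ ⟨hy₁, hv₁⟩ y₂ ⟨hy₂, hv₂⟩ hfy
  obtain ⟨s₁, hs₁, hsy₁⟩ := exists_isSectionOn_apply_eq hcov hy₁ hv₁
  obtain ⟨s₂, hs₂, hsy₂⟩ := exists_isSectionOn_apply_eq hcov hy₂ hv₂
  obtain ⟨_, ⟨u₁, hu₁, rfl⟩, u₂, hu₂, hu⟩ := hmeet s₁ s₂ hs₁ hs₂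
  obtain rfl : u₂ = u₁ := by rw [← hs₂.rightInvOn hu₂, hu, hs₁.rightInvOn hu₁]
  rw [← hsy₁, ← hsy₂, ← hfy]
  exact hs₁.eqOn hcov hs₂ hu₁ hu.symm hv₁

end Sections

section Perturbation

variable {X F : Type*} [TopologicalSpace X] [NormedAddCommGroup F] [NormedSpace ℝ F]
  [FiniteDimensional ℝ F] {f g h : X → F} {K : Set X} {V : Set F} {c : F} {t : ℝ}

lemma IsSectionOn.exists_apply_eq_center {s : F → X} (hs : IsSectionOn f K V s)
    (hV : closedBall c t ⊆ V) (ht : 0 ≤ t) (hh : ContinuousOn h K)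
    (hclose : ∀ y ∈ K, f y ∈ closedBall c t → ‖h y - f y‖ < t) :
    ∃ u ∈ closedBall c t, h (s u) = c := by
  refine exists_eq_center_of_norm_sub_lt (φ := h ∘ s) ht
    (hh.comp (hs.continuousOn.mono hV) fun u hu => hs.mapsTo (hV hu)) fun u hu => ?_
  have hfs : f (s u) = u := hs.rightInvOn (hV hu)
  simpa only [Function.comp_apply, hfs] using
    hclose (s u) (hs.mapsTo (hV hu)) (hfs.symm ▸ hu)

-- Every section of `f` over `V` passes through the unique point of `K` where `h` takes the value
-- `c`, so any two sections coincide.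
lemma injOn_of_norm_sub_lt_injOn (hcov : IsCoveringMapOn (K.domRestrict f) V) (hVo : IsOpen V)
    (hVc : Convex ℝ V) (hV : closedBall c t ⊆ V) (ht : 0 ≤ t) (hh : ContinuousOn h K)
    (hinj : InjOn h K) (hclose : ∀ y ∈ K, f y ∈ closedBall c t → ‖h y - f y‖ < t) :
    InjOn f (K ∩ f ⁻¹' V) := by
  have : ContractibleSpace V := hVc.contractibleSpace ⟨c, hV (mem_closedBall_self ht)⟩
  have : LocallyPathConnectedSpace V := hVo.locallyPathConnectedSpace
  refine injOn_of_sections_meet hcov fun s₁ s₂ hs₁ hs₂ => ?_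
  obtain ⟨u₁, hu₁, hc₁⟩ := hs₁.exists_apply_eq_center hV ht hh hclose
  obtain ⟨u₂, hu₂, hc₂⟩ := hs₂.exists_apply_eq_center hV ht hh hclose
  have hmeet : s₂ u₂ = s₁ u₁ :=
    hinj (hs₂.mapsTo (hV hu₂)) (hs₁.mapsTo (hV hu₁)) (hc₂.trans hc₁.symm)
  exact ⟨s₁ u₁, mem_image_of_mem s₁ (hV hu₁), u₂, hV hu₂, hmeet⟩

variable [T2Space X] {y₀ : X} {δ : ℝ}

lemma exists_mem_apply_eq_of_norm_sub_lt (hK : IsCompact K) (hh : ContinuousOn h K)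
    (hhloc : IsLocalHomeomorphOn h (interior K)) (hy₀ : y₀ ∈ K) (hδ : 0 < δ)
    (hint : ∀ y ∈ K, ‖h y - h y₀‖ < δ → y ∈ interior K) (hg : ContinuousOn g K)
    (hclose : ∀ y ∈ K, ‖g y - h y‖ < δ / 2) : ∃ y ∈ K, g y = h y₀ := by
  have hsub : K ∩ h ⁻¹' ball (h y₀) δ ⊆ interior K := fun y hy =>
    hint y hy.1 (mem_ball_iff_norm.1 hy.2)
  have hcov := isCoveringMapOn_domRestrict hK hh hsub (hhloc.mono hsub)
  have : ContractibleSpace (ball (h y₀) δ) :=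
    (convex_ball _ _).contractibleSpace ⟨_, mem_ball_self hδ⟩
  have : LocallyPathConnectedSpace (ball (h y₀) δ) := isOpen_ball.locallyPathConnectedSpace
  have hhalf : closedBall (h y₀) (δ / 2) ⊆ ball (h y₀) δ := closedBall_subset_ball (half_lt_self hδ)
  obtain ⟨s, hs, -⟩ := exists_isSectionOn_apply_eq hcov hy₀ (mem_ball_self hδ)
  obtain ⟨u, hu, hgu⟩ := hs.exists_apply_eq_center hhalf (half_pos hδ).le hg
    fun y hy _ => hclose y hy
  exact ⟨s u, hs.mapsTo (hhalf hu), hgu⟩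

lemma injOn_preimage_ball_of_norm_sub_lt (hK : IsCompact K) (hh : ContinuousOn h K)
    (hinj : InjOn h K) (hδ : 0 < δ) (hint : ∀ y ∈ K, ‖h y - h y₀‖ < δ → y ∈ interior K)
    (hg : ContinuousOn g K) (hgloc : IsLocalHomeomorphOn g (interior K))
    (hclose : ∀ y ∈ K, ‖g y - h y‖ < δ / 4) : InjOn g (K ∩ g ⁻¹' ball (h y₀) (δ / 2)) := by
  have hsub : K ∩ g ⁻¹' ball (h y₀) (δ / 2) ⊆ interior K := fun y hy => hint y hy.1 <| by
    calc ‖h y - h y₀‖ ≤ ‖h y - g y‖ + ‖g y - h y₀‖ := norm_sub_le_norm_sub_add_norm_sub _ _ _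
      _ < δ / 4 + δ / 2 :=
        add_lt_add (norm_sub_rev (g y) (h y) ▸ hclose y hy.1) (mem_ball_iff_norm.1 hy.2)
      _ < δ := by linarith
  exact injOn_of_norm_sub_lt_injOn (isCoveringMapOn_domRestrict hK hg hsub (hgloc.mono hsub))
    isOpen_ball (convex_ball _ _) (closedBall_subset_ball (by linarith : δ / 4 < δ / 2))
    (by positivity) hh hinj fun y hy _ => norm_sub_rev (g y) (h y) ▸ hclose y hy

lemma existsUnique_apply_eq_of_norm_sub_lt (hK : IsCompact K) (hh : ContinuousOn h K)
    (hinj : InjOn h K) (hhloc : IsLocalHomeomorphOn h (interior K)) (hy₀ : y₀ ∈ K) (hδ : 0 < δ)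
    (hint : ∀ y ∈ K, ‖h y - h y₀‖ < δ → y ∈ interior K) (hg : ContinuousOn g K)
    (hgloc : IsLocalHomeomorphOn g (interior K)) (hclose : ∀ y ∈ K, ‖g y - h y‖ < δ / 4) :
    ∃! y, y ∈ K ∧ g y = h y₀ := by
  obtain ⟨y, hy, hgy⟩ := exists_mem_apply_eq_of_norm_sub_lt hK hh hhloc hy₀ hδ hint hg
    fun y hy => (hclose y hy).trans (by linarith)
  have hcenter : h y₀ ∈ ball (h y₀) (δ / 2) := mem_ball_self (half_pos hδ)
  have hginj := injOn_preimage_ball_of_norm_sub_lt hK hh hinj hδ hint hg hgloc hclose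
  exact ⟨y, ⟨hy, hgy⟩, fun y' ⟨hy', hgy'⟩ =>
    hginj ⟨hy', by rwa [mem_preimage, hgy']⟩ ⟨hy, by rwa [mem_preimage, hgy]⟩ (hgy'.trans hgy.symm)⟩

end Perturbation

section LocalInjectivity

lemma exists_forall_dist_le_mul_dist_of_baireSpace {α β : Type*} [PseudoMetricSpace α]
    [PseudoMetricSpace β] {f : α → β} {B : Set α} [BaireSpace B] (hB : B.Nonempty)
    (hf : ContinuousOn f B)
    (hbound : ∀ p ∈ B, ∃ C : ℝ, ∀ᶠ y in 𝓝 p, dist y p ≤ C * dist (f y) (f p)) :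
    ∃ p₀ ∈ B, ∃ C > 0, ∃ δ > 0, ∀ p ∈ B ∩ ball p₀ δ, ∀ y ∈ ball p₀ δ,
      dist y p ≤ C * dist (f y) (f p) := by
  let A (n : ℕ) : Set B :=
    {p | ∀ y : α, dist y p < 1 / ((n : ℝ) + 1) → dist y p ≤ ((n : ℝ) + 1) * dist (f y) (f p)}
  have hclosed (n : ℕ) : IsClosed (A n) := by
    have hfB : Continuous (B.domRestrict f) := hf.domRestrict
    simp only [A, ofPred_forall]
    exact isClosed_iInter fun y => isClosed_imp
      (isOpen_lt (by fun_prop) continuous_const) (isClosed_le (by fun_prop)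
        (continuous_const.mul (continuous_const.dist hfB)))
  have hcover : ⋃ n, A n = univ := by
    refine eq_univ_of_forall fun p => mem_iUnion.2 ?_
    obtain ⟨C, hC⟩ := hbound p p.2
    obtain ⟨ε, hε, hball⟩ := Metric.eventually_nhds_iff.1 hC
    obtain ⟨n, hn⟩ := exists_nat_gt (max C (1 / ε))
    obtain ⟨hCn, hεn⟩ := max_lt_iff.1 hn
    refine ⟨n, fun y hy => (hball (hy.trans ?_)).trans ?_⟩
    · exact (one_div_lt (by positivity) hε).2 (hεn.trans (lt_add_one _))
    · gcongr
      exact hCn.le.trans (lt_add_one _).le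
  have : Nonempty B := hB.to_subtype
  obtain ⟨n, p₀, hp₀⟩ := nonempty_interior_of_iUnion_of_closed hclosed hcover
  obtain ⟨η, hη, hηA⟩ := Metric.mem_nhds_iff.1 (mem_interior_iff_mem_nhds.1 hp₀)
  refine ⟨p₀, p₀.2, n + 1, by positivity, min η (1 / (n + 1) / 2), by positivity, ?_⟩
  rintro p ⟨hp, hpδ⟩ y hyδ
  have hpη : (⟨p, hp⟩ : B) ∈ ball p₀ η := (lt_min_iff.1 (mem_ball.1 hpδ)).1
  refine hηA hpη y ?_
  calc dist y p ≤ dist y p₀ + dist p p₀ := dist_triangle_right _ _ _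
    _ < 1 / (n + 1) / 2 + 1 / (n + 1) / 2 := add_lt_add (lt_min_iff.1 hyδ).2 (lt_min_iff.1 hpδ).2
    _ = 1 / (n + 1) := add_halves _

variable {E F : Type*} [NormedAddCommGroup E] [NormedSpace ℝ E]
  [NormedAddCommGroup F] [NormedSpace ℝ F]

lemma exists_dist_eq_and_closedBall_subset_ball {w a : F} {ρ t : ℝ} (ha : a ∈ sphere w ρ)
    (ht : 0 < t) (htρ : t ≤ ρ) : ∃ c, dist c a = t ∧ closedBall c (t / 2) ⊆ ball w ρ := by
  have hρ : 0 < ρ := ht.trans_le htρ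
  have hta : t / ρ * dist a w = t := by rw [mem_sphere.1 ha, div_mul_cancel₀ t hρ.ne']
  refine ⟨AffineMap.lineMap a w (t / ρ), ?_, closedBall_subset_ball' ?_⟩
  · rw [dist_lineMap_left, Real.norm_of_nonneg (by positivity), hta]
  · have hone : 0 ≤ 1 - t / ρ := sub_nonneg.2 ((div_le_one hρ).2 htρ)
    rw [dist_lineMap_right, Real.norm_of_nonneg hone, sub_mul, hta, one_mul, mem_sphere.1 ha]
    linarith

lemma exists_norm_sub_sub_le_mul_dist {f : E → F} {D : E →L[ℝ] F} {p : E} {K : Set E}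
    {C ε : ℝ} (hf : HasFDerivAt f D p) (hC : 0 < C)
    (hbound : ∀ y ∈ K, dist y p ≤ C * dist (f y) (f p)) (hε : 0 < ε) :
    ∃ τ > 0, ∀ y ∈ K, dist (f y) (f p) < τ →
      ‖f y - f p - D (y - p)‖ ≤ ε * dist (f y) (f p) := by
  obtain ⟨r, hr, hball⟩ := Metric.eventually_nhds_iff.1 (hf.isLittleO.def (div_pos hε hC))
  refine ⟨r / C, div_pos hr hC, fun y hy hfy => ?_⟩
  have hyr : dist y p < r := (hbound y hy).trans_lt ((lt_div_iff₀' hC).1 hfy)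
  calc ‖f y - f p - D (y - p)‖ ≤ ε / C * dist y p := dist_eq_norm y p ▸ hball hyr
    _ ≤ ε / C * (C * dist (f y) (f p)) := by gcongr; exact hbound y hy
    _ = ε * dist (f y) (f p) := by field_simp

lemma injOn_preimage_ball_of_mem_sphere [FiniteDimensional ℝ F] {f : E → F} {D : E ≃L[ℝ] F}
    {p : E} {K : Set E} {w : F} {ρ C : ℝ}
    (hcov : IsCoveringMapOn (K.domRestrict f) (ball w ρ)) (hf : HasFDerivAt f (D : E →L[ℝ] F) p)
    (hC : 0 < C) (hbound : ∀ y ∈ K, dist y p ≤ C * dist (f y) (f p)) (hρ : 0 < ρ)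
    (hp : f p ∈ sphere w ρ) : InjOn f (K ∩ f ⁻¹' ball w ρ) := by
  obtain ⟨τ, hτ, happrox⟩ :=
    exists_norm_sub_sub_le_mul_dist hf hC hbound (by norm_num : (0 : ℝ) < 1 / 4)
  let t := min ρ (τ / 2)
  have ht : 0 < t := by positivity
  obtain ⟨c, hc, hball⟩ := exists_dist_eq_and_closedBall_subset_ball hp ht (min_le_left _ _)
  let h (y : E) : F := f p + D (y - p)
  have hinj : InjOn h K := fun y _ y' _ hyy' =>
    sub_left_injective (D.injective (add_left_cancel hyy'))
  refine injOn_of_norm_sub_lt_injOn (h := h) hcov isOpen_ball (convex_ball w ρ) hball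
    (half_pos ht).le (by fun_prop) hinj fun y hy hyc => ?_
  have hfy : dist (f y) (f p) ≤ 3 / 2 * t := by
    linarith [dist_triangle (f y) c (f p), mem_closedBall.1 hyc]
  have hτy : dist (f y) (f p) < τ := by linarith [min_le_right ρ (τ / 2)]
  calc ‖h y - f y‖ = ‖f y - f p - D (y - p)‖ := by
        rw [norm_sub_rev, sub_sub]
    _ ≤ 1 / 4 * dist (f y) (f p) := happrox y hy hτy
    _ < t / 2 := by linarith

lemma closedBall_inter_preimage_ball_subset_ball {α β : Type*} [PseudoMetricSpace α]
    [PseudoMetricSpace β] {f : α → β} {p₀ : α} {w : β} {r C ρ : ℝ} (hC : 0 < C)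
    (hbound : ∀ y ∈ closedBall p₀ r, dist y p₀ ≤ C * dist (f y) (f p₀))
    (hw : dist w (f p₀) < r / (2 * C)) (hρ : ρ ≤ dist w (f p₀)) :
    closedBall p₀ r ∩ f ⁻¹' ball w ρ ⊆ ball p₀ r := by
  rintro y ⟨hy, hyw⟩
  have hfy : dist (f y) (f p₀) < r / (2 * C) + r / (2 * C) :=
    (dist_triangle (f y) w (f p₀)).trans_lt
      (add_lt_add ((mem_ball.1 hyw).trans (hρ.trans_lt hw)) hw)
  calc dist y p₀ ≤ C * dist (f y) (f p₀) := hbound y hy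
    _ < C * (r / (2 * C) + r / (2 * C)) := by gcongr
    _ = r := by field_simp; norm_num

-- Around a value `w` that is not attained on `S`, the largest ball avoiding `f '' S` has an
-- exceptional value `f p` on its boundary.
lemma injOn_closedBall_inter_preimage_ball [FiniteDimensional ℝ E] [FiniteDimensional ℝ F]
    {f : E → F} {p₀ : E} {r C : ℝ} {S : Set E} (hr : 0 ≤ r) (hC : 0 < C)
    (hf : HasInvertibleFDerivOn f (closedBall p₀ r)) (hS : IsClosed S) (hp₀ : p₀ ∈ S)
    (hbound : ∀ p ∈ closedBall p₀ r ∩ S, ∀ y ∈ closedBall p₀ r,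
      dist y p ≤ C * dist (f y) (f p))
    (hloc : IsLocalHomeomorphOn f (closedBall p₀ r \ S)) :
    InjOn f (closedBall p₀ r ∩ f ⁻¹' ball (f p₀) (r / (2 * C))) := by
  set K := closedBall p₀ r
  have hp₀K : p₀ ∈ K ∩ S := ⟨mem_closedBall_self hr, hp₀⟩
  rintro y₁ ⟨hy₁, hw⟩ y₂ ⟨hy₂, -⟩ hfy
  set w := f y₁
  have hT : IsCompact (f '' (K ∩ S)) :=
    ((isCompact_closedBall p₀ r).inter_right hS).image_of_continuousOn
      (hf.continuousOn.mono inter_subset_left)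
  obtain ⟨_, ⟨p, hp, rfl⟩, hdist⟩ := hT.exists_infDist_eq_dist ⟨_, mem_image_of_mem f hp₀K⟩ w
  set ρ := infDist w (f '' (K ∩ S))
  have hρle {q : E} (hq : q ∈ K ∩ S) : ρ ≤ dist w (f q) :=
    infDist_le_dist_of_mem (mem_image_of_mem f hq)
  have hρ_nonneg : 0 ≤ ρ := infDist_nonneg
  rcases hρ_nonneg.eq_or_lt with hρ | hρ
  · have heq_p {y : E} (hy : y ∈ K) (hyw : f y = w) : y = p := dist_le_zero.1 <|
      (hbound p hp y hy).trans_eq (by rw [hyw, ← hdist, ← hρ, mul_zero])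
    exact (heq_p hy₁ rfl).trans (heq_p hy₂ hfy.symm).symm
  have hball : K ∩ f ⁻¹' ball w ρ ⊆ ball p₀ r :=
    closedBall_inter_preimage_ball_subset_ball hC (hbound p₀ hp₀K) hw (hρle hp₀K)
  have hsub : K ∩ f ⁻¹' ball w ρ ⊆ K \ S := fun y hy =>
    ⟨hy.1, fun hyS => (hρle ⟨hy.1, hyS⟩).not_gt (mem_ball'.1 hy.2)⟩
  have hcov : IsCoveringMapOn (K.domRestrict f) (ball w ρ) :=
    isCoveringMapOn_domRestrict (isCompact_closedBall p₀ r) hf.continuousOn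
      (hball.trans ball_subset_interior_closedBall) (hloc.mono hsub)
  obtain ⟨D, hD⟩ := hf p hp.1
  exact injOn_preimage_ball_of_mem_sphere hcov hD hC (hbound p hp) hρ
    (mem_sphere'.2 hdist.symm) ⟨hy₁, mem_ball_self hρ⟩ ⟨hy₂, hfy ▸ mem_ball_self hρ⟩ hfy

namespace HasInvertibleFDerivOn

variable {f : E → F} {U : Set E}

lemma exists_eventually_dist_le (hf : HasInvertibleFDerivOn f U) {p : E} (hp : p ∈ U) :
    ∃ C : ℝ, ∀ᶠ y in 𝓝 p, dist y p ≤ C * dist (f y) (f p) := by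
  obtain ⟨D, hD⟩ := hf p hp
  simpa only [dist_eq_norm] using (hD.isTheta_sub D.toHomeomorph.isInducing).2.bound

variable [FiniteDimensional ℝ E]

-- The points without an injectivity neighborhood form a Baire space; were it nonempty, `f` would
-- expand distances from its points uniformly near one of them, and be injective there after all.
lemma exists_mem_nhds_injOn (hf : HasInvertibleFDerivOn f U) (hU : IsOpen U) {y : E} (hy : y ∈ U) :
    ∃ W ∈ 𝓝 y, InjOn f W := by
  let G : Set E := {y | ∃ W ∈ 𝓝 y, InjOn f W}
  have hG : IsOpen G := isOpen_iff_mem_nhds.2 fun y ⟨W, hW, hinj⟩ =>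
    (eventually_mem_nhds_iff.2 hW).mono fun _ hy' => ⟨W, hy', hinj⟩
  have : LocallyCompactSpace ↥(U ∩ Gᶜ) :=
    (hU.isLocallyClosed.inter hG.isClosed_compl.isLocallyClosed).locallyCompactSpace
  by_contra hyG
  obtain ⟨p₀, ⟨hp₀U, hp₀G⟩, C, hC, δ, hδ, hbound⟩ :=
    exists_forall_dist_le_mul_dist_of_baireSpace (B := U ∩ Gᶜ) ⟨y, hy, hyG⟩
      (hf.continuousOn.mono inter_subset_left) fun p hp => hf.exists_eventually_dist_le hp.1
  obtain ⟨r, hr, hball⟩ := nhds_basis_closedBall.mem_iff.1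
    (inter_mem (hU.mem_nhds hp₀U) (ball_mem_nhds p₀ hδ))
  obtain ⟨hrU, hrδ⟩ := subset_inter_iff.1 hball
  have hloc : IsLocalHomeomorphOn f (U ∩ G) :=
    isLocalHomeomorphOn_of_nhds_le_map (hU.inter hG) (hf.continuousOn.mono inter_subset_left)
      (fun _ hy => hf.nhds_le_map hU hy.1) fun _ hy => hy.2
  obtain ⟨D, -⟩ := hf p₀ hp₀U
  have : FiniteDimensional ℝ F := D.toLinearEquiv.finiteDimensional
  have hinj := injOn_closedBall_inter_preimage_ball hr.le hC (fun y hy => hf y (hrU hy))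
    hG.isClosed_compl hp₀G
    (fun p hp y hy => hbound p ⟨⟨hrU hp.1, hp.2⟩, hrδ hp.1⟩ y (hrδ hy))
    (hloc.mono fun y hy => ⟨hrU hy.1, not_notMem.1 hy.2⟩)
  exact hp₀G ⟨_, inter_mem (closedBall_mem_nhds p₀ hr) ((hf.continuousAt hp₀U).preimage_mem_nhds
    (ball_mem_nhds _ (by positivity))), hinj⟩

theorem isLocalHomeomorphOn (hf : HasInvertibleFDerivOn f U) (hU : IsOpen U) :
    IsLocalHomeomorphOn f U :=
  isLocalHomeomorphOn_of_nhds_le_map hU hf.continuousOn (fun _ hy => hf.nhds_le_map hU hy)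
    fun _ hy => hf.exists_mem_nhds_injOn hU hy

end HasInvertibleFDerivOn

end LocalInjectivity

section ImplicitFunction

lemma eventually_forall_norm_sub_lt_of_continuousOn_prod {X Y F : Type*} [TopologicalSpace X]
    [TopologicalSpace Y] [SeminormedAddCommGroup F] {f : X × Y → F} {U K : Set Y} (hU : IsOpen U)
    (hf : ContinuousOn f (univ ×ˢ U)) (hK : IsCompact K) (hKU : K ⊆ U) (x₀ : X) {ε : ℝ}
    (hε : 0 < ε) : ∀ᶠ x in 𝓝 x₀, ∀ y ∈ K, ‖f (x, y) - f (x₀, y)‖ < ε := by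
  refine hK.eventually_forall_of_forall_eventually fun y hy => ?_
  have hcont : ContinuousAt f (x₀, y) :=
    hf.continuousAt ((isOpen_univ.prod hU).mem_nhds ⟨mem_univ x₀, hKU hy⟩)
  have hcont' : ContinuousAt (fun q : X × Y => f (x₀, q.2)) (x₀, y) :=
    hcont.comp (f := fun q : X × Y => (x₀, q.2)) (by fun_prop)
  exact (hcont.sub hcont').norm.eventually_lt_const (by simpa using hε)

lemma exists_isCompact_injOn_forall_mem_interior {X Y : Type*} [TopologicalSpace X]
    [LocallyCompactSpace X] [T2Space X] [MetricSpace Y] {h : X → Y} {U : Set X}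
    (hU : IsOpen U) (hh : IsLocalHomeomorphOn h U) {y₀ : X} (hy₀ : y₀ ∈ U) :
    ∃ K ∈ 𝓝 y₀, IsCompact K ∧ K ⊆ U ∧ InjOn h K ∧
      ∃ δ > 0, ∀ y ∈ K, dist (h y) (h y₀) < δ → y ∈ interior K := by
  obtain ⟨e, hy₀e, rfl⟩ := hh y₀ hy₀
  obtain ⟨K, hK, hKsub, hKc⟩ := local_compact_nhds
    (inter_mem (hU.mem_nhds hy₀) (e.open_source.mem_nhds hy₀e))
  obtain ⟨hKU, hKe⟩ := subset_inter_iff.1 hKsub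
  have hinj : InjOn e K := e.injOn.mono hKe
  have hfrontier : IsClosed (e '' frontier K) :=
    ((hKc.of_isClosed_subset isClosed_frontier hKc.isClosed.frontier_subset).image_of_continuousOn
      (e.continuousOn.mono (hKc.isClosed.frontier_subset.trans hKe))).isClosed
  have hy₀K : e y₀ ∉ e '' frontier K := by
    rintro ⟨y, hy, hey⟩
    obtain rfl := hinj (hKc.isClosed.frontier_subset hy) (mem_of_mem_nhds hK) hey
    exact hy.2 (mem_interior_iff_mem_nhds.2 hK)
  obtain ⟨δ, hδ, hball⟩ := Metric.isOpen_iff.1 hfrontier.isOpen_compl _ hy₀K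
  refine ⟨K, hK, hKc, hKU, hinj, δ, hδ, fun y hy hyδ => by_contra fun hyint => ?_⟩
  exact hball hyδ (mem_image_of_mem e ⟨subset_closure hy, hyint⟩)

lemma hasInvertibleFDerivOn_of_bijective {E F : Type*} [NormedAddCommGroup E] [NormedSpace ℝ E]
    [FiniteDimensional ℝ E] [NormedAddCommGroup F] [NormedSpace ℝ F] {f : E → F} {U : Set E}
    (hf : ∀ y ∈ U, ∃ D : E →L[ℝ] F, HasFDerivAt f D y ∧ Function.Bijective D) :
    HasInvertibleFDerivOn f U := by
  intro y hy
  obtain ⟨D, hD, hbij⟩ := hf y hy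
  let L : E ≃L[ℝ] F := (LinearEquiv.ofBijective (D : E →ₗ[ℝ] F) hbij).toContinuousLinearEquiv
  have hL : (L : E →L[ℝ] F) = D := rfl
  exact ⟨L, hL ▸ hD⟩

theorem implicit_function_unique_solution_general {X E F : Type*} [TopologicalSpace X]
    [NormedAddCommGroup E] [NormedSpace ℝ E] [FiniteDimensional ℝ E] [NormedAddCommGroup F]
    [NormedSpace ℝ F] {U : Set E} (hU : IsOpen U) {f : X × E → F}
    (hf : ContinuousOn f (univ ×ˢ U))
    (hdiff : ∀ x, HasInvertibleFDerivOn (fun y => f (x, y)) U) (x₀ : X) {y₀ : E} (hy₀ : y₀ ∈ U) :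
    ∃ V ∈ 𝓝 x₀, ∃ K, IsCompact K ∧ K ⊆ U ∧ K ∈ 𝓝 y₀ ∧
      ∀ x ∈ V, ∃! y, y ∈ K ∧ f (x, y) = f (x₀, y₀) := by
  obtain ⟨D, -⟩ := hdiff x₀ y₀ hy₀
  have : FiniteDimensional ℝ F := D.toLinearEquiv.finiteDimensional
  have hloc (x : X) : IsLocalHomeomorphOn (fun y => f (x, y)) U := (hdiff x).isLocalHomeomorphOn hU
  obtain ⟨K, hK, hKc, hKU, hinj, δ, hδ, hint⟩ :=
    exists_isCompact_injOn_forall_mem_interior hU (hloc x₀) hy₀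
  have hcont (x : X) : ContinuousOn (fun y => f (x, y)) K := (hdiff x).continuousOn.mono hKU
  have hlocK (x : X) : IsLocalHomeomorphOn (fun y => f (x, y)) (interior K) :=
    (hloc x).mono (interior_subset.trans hKU)
  refine ⟨_, eventually_forall_norm_sub_lt_of_continuousOn_prod hU hf hKc hKU x₀
    (by positivity : 0 < δ / 4), K, hKc, hKU, hK, fun x hx => ?_⟩
  exact existsUnique_apply_eq_of_norm_sub_lt hKc (hcont x₀) hinj (hlocK x₀) (mem_of_mem_nhds hK)
    hδ (fun y hy => dist_eq_norm (f (x₀, y)) (f (x₀, y₀)) ▸ hint y hy) (hcont x) (hlocK x) hx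

end ImplicitFunction

/-- Local uniqueness part of the implicit function theorem: there are a neighborhood
`V` of `x₀` and a compact neighborhood `K ⊆ U` of `y₀` such that for every `x ∈ V`
the equation `f (x, y) = f (x₀, y₀)` has exactly one solution `y ∈ K`. -/
theorem implicit_function_unique_solution
    {n : ℕ} {X : Type*} [TopologicalSpace X] [LocallyPathConnectedSpace X] [T2Space X]
    {U : Set (EuclideanSpace ℝ (Fin n))} (hU : IsOpen U)
    (f : X × EuclideanSpace ℝ (Fin n) → EuclideanSpace ℝ (Fin n))
    (hf : ContinuousOn f ((Set.univ : Set X) ×ˢ U))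
    (hdiff : ∀ x : X, ∀ y ∈ U,
      ∃ D : EuclideanSpace ℝ (Fin n) →L[ℝ] EuclideanSpace ℝ (Fin n),
        HasFDerivAt (fun y' => f (x, y')) D y ∧ Function.Bijective D)
    (x₀ : X) (y₀ : EuclideanSpace ℝ (Fin n)) (hy₀ : y₀ ∈ U) :
    ∃ V ∈ nhds x₀, ∃ K : Set (EuclideanSpace ℝ (Fin n)),
      IsCompact K ∧ K ⊆ U ∧ K ∈ nhds y₀ ∧
      ∀ x ∈ V, ∃! y, y ∈ K ∧ f (x, y) = f (x₀, y₀) :=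
  implicit_function_unique_solution_general hU hf
    (fun x => hasInvertibleFDerivOn_of_bijective (hdiff x)) x₀ hy₀
end
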